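/- arXiv:2106.08949 — 3 statements merged into one kernel-verified Lean document; each statement's English description precedes it below -/
import Mathlib

section
/- Let d ≥ 1 be an integer, α ∈ (0,1], p ∈ [1,∞), and for a > 0 let w(a) be the positive weight sequence determined by w_1(a)⋯w_n(a) = exp(a·n^α) for all n ≥ 1 (that is, w_n(a) = exp(a(n^α − (n−1)^α))). Let Λ ⊂ (0,∞)^d be σ-compact. Then the following are equivalent: (a) the family (B_{w(λ(1))} × ⋯ × B_{w(λ(d))})_{λ∈Λ} has a common hypercyclic vector in ℓp(ℕ)^d; (b) the family (B_{w(λ(1))} × ⋯ × B_{w(λ(d))})_{λ∈Λ} has a common hypercyclic algebra in ℓp(ℕ)^d for the coordinatewise product. -/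
open scoped ENNReal
open Finset

noncomputable section

/-- The space `ℓᵖ(ℕ)` of `p`-summable complex sequences. -/
abbrev lpC (p : ℝ≥0∞) : Type := lp (fun _ : ℕ => ℂ) p

/-- `T` is the product operator `B_{w(lam 0)} × ⋯ × B_{w(lam (d-1))}` of weighted backward
shifts, the weight sequence of the `i`-th factor being `(w (lam i) n)_{n ≥ 1}`. -/
def IsProductShift (p : ℝ≥0∞) [Fact (1 ≤ p)] (d : ℕ) (w : ℝ → ℕ → ℝ)
    (T : (Fin d → lpC p) →L[ℂ] (Fin d → lpC p)) (lam : Fin d → ℝ) : Prop :=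
  ∀ (v : Fin d → lpC p) (i : Fin d) (n : ℕ),
    (T v) i n = (w (lam i) (n + 1) : ℂ) * v i (n + 1)

/-- The family `T lam`, `lam ∈ S`, admits a common hypercyclic algebra for the coordinatewise
product: there is a non-unital subalgebra `A ≠ {0}` of `(ℓᵖ(ℕ))^d` (closed under addition,
scalar multiplication and the componentwise coordinatewise product) every nonzero element of
which is a common hypercyclic vector for the family. -/
def CommonHypercyclicAlgebraCW (p : ℝ≥0∞) [Fact (1 ≤ p)] (d : ℕ) (S : Set (Fin d → ℝ))
    (T : (Fin d → ℝ) → ((Fin d → lpC p) →L[ℂ] (Fin d → lpC p))) : Prop :=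
  ∃ A : Set (Fin d → lpC p),
    (0 : Fin d → lpC p) ∈ A ∧
    (∀ x ∈ A, ∀ y ∈ A, x + y ∈ A) ∧
    (∀ (c : ℂ), ∀ x ∈ A, c • x ∈ A) ∧
    (∀ x ∈ A, ∀ y ∈ A, ∃ z ∈ A, ∀ (i : Fin d) (n : ℕ), z i n = x i n * y i n) ∧
    (∃ x ∈ A, x ≠ 0) ∧
    (∀ x ∈ A, x ≠ 0 → ∀ lam ∈ S, Dense (Set.range fun n : ℕ => ((T lam) ^ (n + 1)) x))

/-- The weight sequence with partial products `w 1 (a) ⋯ w n (a) = exp (a * n ^ α)`,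
i.e. `w n (a) = exp (a * (n ^ α - (n - 1) ^ α))`. -/
def wExp (α a : ℝ) (n : ℕ) : ℝ := Real.exp (a * ((n : ℝ) ^ α - ((n : ℝ) - 1) ^ α))

/-!
Let `x` be a common hypercyclic vector. By a Baire category argument it suffices that, for each
compact set `K` of parameters, the vectors `u` such that every `T_λ`, `λ ∈ K`, has an iterate
sending `u ^ m` close to a given `v` and `u ^ (m + 1)` close to `0` are dense: a nonzero element of
the algebra generated by a `u` common to all these sets is `c u ^ m + O(u ^ (m + 1))` with
`c ≠ 0`, hence hypercyclic.

For fixed `K`, such a `u` is obtained by adding coordinatewise `m`-th roots of `x` to a finitely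
supported vector. If `T_λ ^ N x` is bounded, then `x l = O(1 / (w₁ ⋯ w_l))` for `l` in a window
`[N, N + M)`, uniformly in `λ ∈ K`, so there the `m`-th roots of `x` are dominated by a fixed
`ℓᵖ` sequence `g`. Extracting the `m`-th root only where `g` dominates it, far from the origin,
gives a small perturbation `h` such that `T_λ ^ N (h ^ m)` coincides with `T_λ ^ N x` on the
support of `v` and is no further than it from `v` elsewhere, while the smallness of `h` makes
`T_λ ^ N (h ^ (m + 1))` small.
-/

open Filter Topology Polynomial

/-! ### Coordinatewise operations on `ℓᵖ` -/

section Lp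

variable {p : ℝ≥0∞} {ι α : Type*} {E F : α → Type*}
  [∀ a, NormedAddCommGroup (E a)] [∀ a, NormedAddCommGroup (F a)]

lemma exponent_ne_zero (p : ℝ≥0∞) [Fact (1 ≤ p)] : p ≠ 0 :=
  (zero_lt_one.trans_le Fact.out).ne'

lemma nontrivial_lp {𝕜 : Type*} [NormedField 𝕜] [Nonempty α] :
    Nontrivial (lp (fun _ : α => 𝕜) p) := by
  classical
  obtain ⟨a⟩ := ‹Nonempty α›
  refine ⟨lp.single p a 1, 0, fun h => one_ne_zero (α := 𝕜) ?_⟩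
  simpa using congrArg (fun f : lp (fun _ : α => 𝕜) p => f a) h

lemma lp_norm_le_mul_norm [∀ a, NormedSpace ℝ (F a)] (hp : p ≠ 0) {x : lp E p} {y : lp F p}
    {c : ℝ} (hc : 0 ≤ c) (h : ∀ a, ‖x a‖ ≤ c * ‖y a‖) : ‖x‖ ≤ c * ‖y‖ :=
  calc
    ‖x‖ ≤ ‖c • y‖ := lp.norm_mono hp fun a => by
      simpa only [lp.coeFn_smul, Pi.smul_apply, norm_smul, Real.norm_of_nonneg hc] using h a
    _ = c * ‖y‖ := by rw [lp.norm_const_smul hp, Real.norm_of_nonneg hc]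

variable [Fact (1 ≤ p)]

lemma pi_lp_norm_le_mul_norm [Fintype ι] [∀ a, NormedSpace ℝ (F a)] {x : ι → lp E p}
    {y : ι → lp F p} {c : ℝ} (hc : 0 ≤ c) (h : ∀ i a, ‖x i a‖ ≤ c * ‖y i a‖) :
    ‖x‖ ≤ c * ‖y‖ := by
  refine (pi_norm_le_iff_of_nonneg (by positivity)).2 fun i => ?_
  calc
    ‖x i‖ ≤ c * ‖y i‖ := lp_norm_le_mul_norm (exponent_ne_zero p) hc (h i)
    _ ≤ c * ‖y‖ := by gcongr; exact norm_le_pi_norm y i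

lemma pi_lp_norm_mono [Fintype ι] [∀ a, NormedSpace ℝ (F a)] {x : ι → lp E p} {y : ι → lp F p}
    (h : ∀ i a, ‖x i a‖ ≤ ‖y i a‖) : ‖x‖ ≤ ‖y‖ := by
  simpa using pi_lp_norm_le_mul_norm zero_le_one (by simpa using h)

lemma norm_apply_apply_le_norm [Fintype ι] (x : ι → lp E p) (i : ι) (a : α) : ‖x i a‖ ≤ ‖x‖ :=
  (lp.norm_apply_le_norm (exponent_ne_zero p) (x i) a).trans (norm_le_pi_norm x i)

end Lp

section Tail

variable {p : ℝ≥0∞} {ι : Type*} {E : ℕ → Type*} [∀ n, NormedAddCommGroup (E n)]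

/-- The tail of an `ℓᵖ` sequence: its coordinates of index less than `L` are set to `0`. -/
def lpTail (L : ℕ) (f : lp E p) : lp E p :=
  ⟨fun n => if L ≤ n then f n else 0, (lp.memℓp f).mono' fun n => by split_ifs <;> simp⟩

lemma lpTail_apply (L : ℕ) (f : lp E p) (n : ℕ) : lpTail L f n = if L ≤ n then f n else 0 := rfl

variable [Fact (1 ≤ p)]

lemma tendsto_lpTail (hp : p ≠ ⊤) (f : lp E p) : Tendsto (lpTail · f) atTop (𝓝 0) := by
  have lpTail_eq (L : ℕ) : lpTail L f = f - ∑ n ∈ range L, lp.single p n (f n) := by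
    ext n
    rw [lp.coeFn_sub, Pi.sub_apply, lp.coeFn_sum, Finset.sum_apply, lpTail_apply]
    by_cases hn : L ≤ n
    · rw [if_pos hn, Finset.sum_eq_zero, sub_zero]
      intro k hk
      exact lp.single_apply_ne p k (f k) (by grind)
    · rw [if_neg hn, Finset.sum_eq_single_of_mem n (by grind), lp.single_apply_self, sub_self]
      intro k _ hk
      exact lp.single_apply_ne p k (f k) hk.symm
  simp only [lpTail_eq]
  simpa using (tendsto_const_nhds (x := f)).sub (lp.hasSum_single hp f).tendsto_sum_nat

lemma dense_setOf_eventually_zero (hp : p ≠ ⊤) :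
    Dense {v : ι → lp E p | ∃ M, ∀ i n, M ≤ n → v i n = 0} := fun v => by
  refine mem_closure_of_tendsto (f := fun L i => v i - lpTail L (v i)) (tendsto_pi_nhds.2 fun i =>
    by simpa using tendsto_const_nhds.sub (tendsto_lpTail hp (v i)))
    (Eventually.of_forall fun L => ⟨L, fun i n hn => ?_⟩)
  simp [lpTail_apply, hn]

end Tail

section Mul

variable {p : ℝ≥0∞} [Fact (1 ≤ p)] {α 𝕜 : Type*} [RCLike 𝕜]

lemma norm_mul_apply_le (x y : lp (fun _ : α => 𝕜) p) (a : α) :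
    ‖x a * y a‖ ≤ ‖x‖ * ‖y a‖ := by
  rw [norm_mul]
  gcongr
  exact lp.norm_apply_le_norm (exponent_ne_zero p) x a

/-- The coordinatewise product on `ℓᵖ`, as a continuous bilinear map. -/
def lpMul : lp (fun _ : α => 𝕜) p →L[𝕜] lp (fun _ : α => 𝕜) p →L[𝕜] lp (fun _ : α => 𝕜) p :=
  LinearMap.mkContinuous₂
    (LinearMap.mk₂ 𝕜
      (fun x y => ⟨fun a => x a * y a,
        ((lp.memℓp y).const_mul (‖x‖ : 𝕜)).mono' fun a => by
          simpa using norm_mul_apply_le x y a⟩)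
      (fun _ _ _ => by ext; exact add_mul _ _ _) (fun _ _ _ => by ext; simp [mul_assoc])
      (fun _ _ _ => by ext; exact mul_add _ _ _) (fun _ _ _ => by ext; simp [mul_left_comm]))
    1 fun x y => by
      rw [one_mul]
      exact lp_norm_le_mul_norm (exponent_ne_zero p) (norm_nonneg x) (norm_mul_apply_le x y)

lemma lpMul_apply (x y : lp (fun _ : α => 𝕜) p) (a : α) : lpMul x y a = x a * y a := rfl

/-- The coordinatewise power `x ^ (k + 1)` on `ℓᵖ`; the exponent is shifted because the product has
no unit. -/
def lpPowSucc : ℕ → lp (fun _ : α => 𝕜) p → lp (fun _ : α => 𝕜) p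
  | 0, x => x
  | k + 1, x => lpMul (lpPowSucc k x) x

lemma lpPowSucc_apply (k : ℕ) (x : lp (fun _ : α => 𝕜) p) (a : α) :
    lpPowSucc k x a = x a ^ (k + 1) := by
  induction k with
  | zero => rw [lpPowSucc, zero_add, pow_one]
  | succ k ih => rw [lpPowSucc, lpMul_apply, ih, pow_succ _ (k + 1)]

lemma continuous_lpPowSucc (k : ℕ) :
    Continuous (lpPowSucc k : lp (fun _ : α => 𝕜) p → lp (fun _ : α => 𝕜) p) := by
  induction k with
  | zero => exact continuous_id
  | succ k ih => exact (lpMul (p := p) (α := α) (𝕜 := 𝕜)).continuous₂.comp (ih.prodMk continuous_id)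

end Mul

lemma exists_lp_truncated_root {p : ℝ≥0∞} {α 𝕜 : Type*} [NormedField 𝕜] [IsAlgClosed 𝕜]
    (x : α → 𝕜) (g : lp (fun _ : α => 𝕜) p) (k : ℕ) :
    ∃ h : lp (fun _ : α => 𝕜) p, ∀ a, ‖h a‖ ≤ ‖g a‖ ∧
      h a ^ (k + 1) = if ‖x a‖ ≤ ‖g a‖ ^ (k + 1) then x a else 0 := by
  choose r hr using fun a => IsAlgClosed.exists_pow_nat_eq
    (if ‖x a‖ ≤ ‖g a‖ ^ (k + 1) then x a else 0) k.succ_pos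
  have norm_r_le (a : α) : ‖r a‖ ≤ ‖g a‖ := by
    refine le_of_pow_le_pow_left₀ k.succ_ne_zero (norm_nonneg _) ?_
    rw [← norm_pow, hr]
    split_ifs with h
    · exact h
    · simp
  exact ⟨⟨r, (lp.memℓp g).mono' norm_r_le⟩, fun a => ⟨norm_r_le a, hr a⟩⟩

/-! ### Products of weighted shifts -/

/-- `T` is the product over `i` of the backward shifts on `ℓᵖ` with weights `(w i n)_{n ≥ 1}`. -/
def IsWeightedShift {p : ℝ≥0∞} [Fact (1 ≤ p)] {ι : Type*} (w : ι → ℕ → ℂ)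
    (T : (ι → lpC p) →L[ℂ] (ι → lpC p)) : Prop :=
  ∀ (v : ι → lpC p) (i : ι) (n : ℕ), T v i n = w i (n + 1) * v i (n + 1)

section WeightedShift

variable {p : ℝ≥0∞} [Fact (1 ≤ p)] {ι : Type*} {w w' : ι → ℕ → ℂ}
  {T T' : (ι → lpC p) →L[ℂ] (ι → lpC p)}

lemma IsWeightedShift.pow_apply (hT : IsWeightedShift w T) (N : ℕ) (v : ι → lpC p) (i : ι)
    (n : ℕ) : (T ^ N) v i n = (∏ k ∈ range N, w i (n + k + 1)) * v i (n + N) := by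
  induction N generalizing n with
  | zero => simp
  | succ N ih =>
    rw [pow_succ', mul_apply_eq_comp, hT, ih, ← mul_assoc, Finset.prod_range_succ',
      mul_comm (w _ _)]
    simp only [add_zero, add_comm, add_left_comm]

variable [Fintype ι]

lemma IsWeightedShift.norm_sub_le (hT : IsWeightedShift w T) (hT' : IsWeightedShift w' T')
    {c : ℝ} (hc : 0 ≤ c) (h : ∀ i n, ‖w' i (n + 1) - w i (n + 1)‖ ≤ c * ‖w i (n + 1)‖) :
    ‖T' - T‖ ≤ c * ‖T‖ := by
  refine ContinuousLinearMap.opNorm_le_bound _ (by positivity) fun v => ?_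
  calc
    ‖(T' - T) v‖ ≤ c * ‖T v‖ := pi_lp_norm_le_mul_norm hc fun i n => by
      change ‖T' v i n - T v i n‖ ≤ _
      rw [hT', hT, ← sub_mul, norm_mul, norm_mul, ← mul_assoc]
      gcongr
      exact h i n
    _ ≤ c * (‖T‖ * ‖v‖) := by gcongr; exact T.le_opNorm v
    _ = c * ‖T‖ * ‖v‖ := by ring

lemma IsWeightedShift.norm_pow_le (hT : IsWeightedShift w T) (N : ℕ) {x y : ι → lpC p} {c : ℝ}
    (hc : 0 ≤ c) (h : ∀ i n, ‖x i (n + N)‖ ≤ c * ‖y i (n + N)‖) :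
    ‖(T ^ N) x‖ ≤ c * ‖(T ^ N) y‖ := by
  refine pi_lp_norm_le_mul_norm hc fun i n => ?_
  rw [hT.pow_apply, hT.pow_apply, norm_mul, norm_mul, mul_left_comm]
  gcongr
  exact h i n

lemma IsWeightedShift.norm_pow_sub_le (hT : IsWeightedShift w T) (N : ℕ) {x y v : ι → lpC p}
    (h : ∀ i n, y i (n + N) = x i (n + N) ∨ y i (n + N) = 0 ∧ v i n = 0) :
    ‖(T ^ N) y - v‖ ≤ ‖(T ^ N) x - v‖ := by
  refine pi_lp_norm_mono fun i n => ?_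
  change ‖(T ^ N) y i n - v i n‖ ≤ ‖(T ^ N) x i n - v i n‖
  rw [hT.pow_apply, hT.pow_apply]
  rcases h i n with hy | ⟨hy, hv⟩
  · rw [hy]
  · simpa only [hy, hv, mul_zero, sub_zero, norm_zero] using norm_nonneg _

-- `(w 1 ⋯ w l) * x i l` is the coordinate of index `0` of `T ^ l x = T ^ n (T ^ N x)`, `l = n + N`.
lemma IsWeightedShift.norm_apply_add_le (hT : IsWeightedShift w T) (x : ι → lpC p) (i : ι)
    (n N : ℕ) {b : ℝ} (hb : 0 ≤ b) (hwb : 1 ≤ ‖∏ k ∈ range (n + N), w i (k + 1)‖ * b) :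
    ‖x i (n + N)‖ ≤ ‖T‖ ^ n * ‖(T ^ N) x‖ * b := by
  have : Nonempty ι := ⟨i⟩
  have : Nontrivial (lpC p) := nontrivial_lp
  have norm_prod_mul_le : ‖∏ k ∈ range (n + N), w i (k + 1)‖ * ‖x i (n + N)‖ ≤
      ‖T‖ ^ n * ‖(T ^ N) x‖ :=
    calc
      _ = ‖(T ^ (n + N)) x i 0‖ := by rw [hT.pow_apply, norm_mul]; simp only [zero_add]
      _ ≤ ‖(T ^ n) ((T ^ N) x)‖ := by
        rw [pow_add, mul_apply_eq_comp]; exact norm_apply_apply_le_norm _ i 0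
      _ ≤ ‖T‖ ^ n * ‖(T ^ N) x‖ :=
        (T ^ n).le_of_opNorm_le (_root_.norm_pow_le T n) _
  calc
    ‖x i (n + N)‖ ≤ ‖∏ k ∈ range (n + N), w i (k + 1)‖ * b * ‖x i (n + N)‖ :=
      le_mul_of_one_le_left (norm_nonneg _) hwb
    _ = ‖∏ k ∈ range (n + N), w i (k + 1)‖ * ‖x i (n + N)‖ * b := by ring
    _ ≤ ‖T‖ ^ n * ‖(T ^ N) x‖ * b := by gcongr

end WeightedShift

/-- Uniform decay of the inverse partial products `(w₁ ⋯ wₙ)⁻¹` of the weights attached to the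
parameters in `K`: for every `k`, their `(k + 1)`-th roots are dominated by a single `ℓᵖ` sequence.
The inequality is written without division, so it also forces the products not to vanish. -/
def HasSummableRoots (p : ℝ≥0∞) {X ι : Type*} (w : X → ι → ℕ → ℂ) (K : Set X) : Prop :=
  ∀ (i : ι) (k : ℕ), ∃ g : lpC p, ∀ lam ∈ K, ∀ n,
    1 ≤ ‖∏ j ∈ range n, w lam i (j + 1)‖ * ‖g n‖ ^ (k + 1)

section Family

variable {p : ℝ≥0∞} [Fact (1 ≤ p)] {ι X : Type*} [Fintype ι] [TopologicalSpace X]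
  {w : X → ι → ℕ → ℂ} {T : X → (ι → lpC p) →L[ℂ] (ι → lpC p)} {K : Set X}

lemma exists_pow_norm_bound (hK : IsCompact K) (hTc : ContinuousOn T K) (M : ℕ) :
    ∃ C : ℝ, 1 ≤ C ∧ ∀ lam ∈ K, ∀ n < M, ‖T lam‖ ^ n ≤ C := by
  obtain ⟨R, hR⟩ := hK.exists_bound_of_continuousOn hTc
  refine ⟨max 1 R ^ M, one_le_pow₀ (le_max_left _ _), fun lam hlam n hn => ?_⟩
  calc
    ‖T lam‖ ^ n ≤ max 1 R ^ n := by gcongr; exact (hR lam hlam).trans (le_max_right _ _)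
    _ ≤ max 1 R ^ M := pow_le_pow_right₀ (le_max_left _ _) hn.le

lemma HasSummableRoots.exists_majorant (hw : HasSummableRoots p w K) (hK : IsCompact K)
    (hTc : ContinuousOn T K) (hT : ∀ lam ∈ K, IsWeightedShift (w lam) (T lam)) (k M : ℕ) (r : ℝ) :
    ∃ g : ι → lpC p, ∀ lam ∈ K, ∀ (N : ℕ) (x : ι → lpC p), ‖(T lam ^ N) x‖ ≤ r →
      ∀ i, ∀ n < M, ‖x i (n + N)‖ ≤ ‖g i (n + N)‖ ^ (k + 1) := by
  obtain ⟨C, hC1, hC⟩ := exists_pow_norm_bound hK hTc M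
  choose g hg using fun i => hw i k
  obtain ⟨D, hD_def⟩ : ∃ D, D = C * max 1 r := ⟨_, rfl⟩
  have hD : 1 ≤ D := hD_def ▸ one_le_mul_of_one_le_of_one_le hC1 (le_max_left _ _)
  refine ⟨fun i => D • g i, fun lam hlam N x hx i n hn => ?_⟩
  calc
    ‖x i (n + N)‖ ≤ ‖T lam‖ ^ n * ‖(T lam ^ N) x‖ * ‖g i (n + N)‖ ^ (k + 1) :=
      (hT lam hlam).norm_apply_add_le x i n N (by positivity) (hg i lam hlam (n + N))
    _ ≤ D * ‖g i (n + N)‖ ^ (k + 1) := by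
      rw [hD_def]
      gcongr
      exacts [hC lam hlam n hn, hx.trans (le_max_right _ _)]
    _ ≤ D ^ (k + 1) * ‖g i (n + N)‖ ^ (k + 1) := by gcongr; exact le_self_pow₀ hD k.succ_ne_zero
    _ = ‖(D • g i) (n + N)‖ ^ (k + 1) := by
      rw [lp.coeFn_smul, Pi.smul_apply, norm_smul, mul_pow, Real.norm_of_nonneg (by positivity)]

end Family

/-! ### Return sets of coordinatewise powers -/

lemma frequently_mem_of_dense_range {X : Type*} [TopologicalSpace X] [T1Space X] [PerfectSpace X]
    {f : ℕ → X} (hf : Dense (Set.range f)) {U : Set X} (hU : IsOpen U) (hne : U.Nonempty) :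
    ∃ᶠ N in atTop, f N ∈ U := by
  refine frequently_atTop.2 fun L => ?_
  obtain ⟨_, hyU, ⟨N, rfl⟩, hN⟩ :=
    (hf.sdiff_finite ((Set.finite_lt_nat L).image f)).inter_open_nonempty U hU hne
  exact ⟨N, not_lt.1 fun h => hN ⟨N, h, rfl⟩, hyU⟩

lemma isOpen_biInter_of_isCompact {X Y : Type*} [TopologicalSpace X] [TopologicalSpace Y]
    {K : Set X} (hK : IsCompact K) {U : X → Set Y} (hU : IsOpen {q : Y × K | q.1 ∈ U q.2}) :
    IsOpen (⋂ x ∈ K, U x) := by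
  have : CompactSpace K := isCompact_iff_compactSpace.1 hK
  refine isOpen_iff_mem_nhds.2 fun y hy => ?_
  have eventually_mem : ∀ᶠ z in 𝓝 y, ∀ x ∈ (Set.univ : Set K), z ∈ U x :=
    isCompact_univ.eventually_forall_of_forall_eventually fun x _ =>
      hU.mem_nhds (Set.mem_iInter₂.1 hy x x.2)
  filter_upwards [eventually_mem] with z hz
  exact Set.mem_iInter₂.2 fun x hx => hz ⟨x, hx⟩ trivial

section PowerReturn

variable {p : ℝ≥0∞} [Fact (1 ≤ p)] {ι : Type*} [Fintype ι]

/-- The vectors `u` for which some iterate of `T` sends the coordinatewise power `u ^ (m + 1)`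
`ε`-close to `v` and the next power `u ^ (m + 2)` `ε`-close to `0`. -/
def powerReturnSet (T : (ι → lpC p) →L[ℂ] (ι → lpC p)) (m : ℕ) (v : ι → lpC p) (ε : ℝ) :
    Set (ι → lpC p) :=
  {u | ∃ N : ℕ, ‖(T ^ (N + 1)) (lpPowSucc m ∘ u) - v‖ < ε ∧
    ‖(T ^ (N + 1)) (lpPowSucc (m + 1) ∘ u)‖ < ε}

lemma powerReturnSet_subset (T : (ι → lpC p) →L[ℂ] (ι → lpC p)) (m : ℕ) {v v' : ι → lpC p}
    {ε ε' : ℝ} (h : ‖v - v'‖ + ε ≤ ε') : powerReturnSet T m v ε ⊆ powerReturnSet T m v' ε' := by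
  rintro u ⟨N, hv, h0⟩
  have triangle := norm_sub_le_norm_sub_add_norm_sub ((T ^ (N + 1)) (lpPowSucc m ∘ u)) v v'
  exact ⟨N, by linarith, by linarith [norm_nonneg (v - v')]⟩

lemma IsWeightedShift.mem_powerReturnSet {w : ι → ℕ → ℂ} {T : (ι → lpC p) →L[ℂ] (ι → lpC p)}
    (hT : IsWeightedShift w T) {x u v : ι → lpC p} {m N : ℕ} {ε ρ : ℝ} (hρ : 0 < ρ)
    (hρε : ρ * (‖v‖ + ε) ≤ ε) (hx : ‖(T ^ (N + 1)) x - v‖ < ε)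
    (hroot : ∀ i n, u i (n + (N + 1)) ^ (m + 1) = x i (n + (N + 1)) ∨
      u i (n + (N + 1)) ^ (m + 1) = 0 ∧ v i n = 0)
    (hsmall : ∀ i n, ‖u i (n + (N + 1))‖ ≤ ρ) : u ∈ powerReturnSet T m v ε := by
  refine ⟨N, (hT.norm_pow_sub_le _ fun i n => ?_).trans_lt hx, ?_⟩
  · simpa only [Function.comp_apply, lpPowSucc_apply] using hroot i n
  have norm_root_le (i : ι) (n : ℕ) :
      ‖u i (n + (N + 1)) ^ (m + 1)‖ ≤ ‖x i (n + (N + 1))‖ := by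
    rcases hroot i n with h | ⟨h, -⟩ <;> simp [h]
  calc
    ‖(T ^ (N + 1)) (lpPowSucc (m + 1) ∘ u)‖ ≤ ρ * ‖(T ^ (N + 1)) x‖ :=
      hT.norm_pow_le _ hρ.le fun i n => by
        rw [Function.comp_apply, lpPowSucc_apply, pow_succ', norm_mul]
        exact mul_le_mul (hsmall i n) (norm_root_le i n) (norm_nonneg _) hρ.le
    _ < ρ * (‖v‖ + ε) := by
      gcongr
      linarith [norm_le_norm_add_norm_sub' ((T ^ (N + 1)) x) v]
    _ ≤ ε := hρε

section Compact

variable {X : Type*} [TopologicalSpace X] {w : X → ι → ℕ → ℂ}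
  {T : X → (ι → lpC p) →L[ℂ] (ι → lpC p)} {K : Set X}

lemma isOpen_biInter_powerReturnSet (hK : IsCompact K) (hTc : ContinuousOn T K) (m : ℕ)
    (v : ι → lpC p) (ε : ℝ) : IsOpen (⋂ lam ∈ K, powerReturnSet (T lam) m v ε) := by
  have continuous_orbit (k N : ℕ) : Continuous fun q : (ι → lpC p) × K =>
      (T q.2 ^ (N + 1)) (lpPowSucc k ∘ q.1) :=
    (((continuousOn_iff_continuous_domRestrict.1 hTc).comp continuous_snd).pow (N + 1)).clm_apply
      (continuous_pi fun i =>
        (continuous_lpPowSucc k).comp ((continuous_apply i).comp continuous_fst))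
  refine isOpen_biInter_of_isCompact hK ?_
  simp only [powerReturnSet, Set.mem_ofPred_eq]
  rw [Set.ofPred_exists]
  exact isOpen_iUnion fun N =>
    (isOpen_lt ((continuous_orbit m N).sub continuous_const).norm continuous_const).inter
      (isOpen_lt (continuous_orbit (m + 1) N).norm continuous_const)

variable [Nonempty ι]

lemma exists_norm_sub_lt_mem_powerReturnSet (hp : p ≠ ⊤) (hK : IsCompact K)
    (hTc : ContinuousOn T K) (hT : ∀ lam ∈ K, IsWeightedShift (w lam) (T lam))
    (hw : HasSummableRoots p w K) {x : ι → lpC p}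
    (hx : ∀ lam ∈ K, Dense (Set.range fun n : ℕ => (T lam ^ (n + 1)) x)) {u₀ v : ι → lpC p} {M : ℕ}
    (hu₀ : ∀ i n, M ≤ n → u₀ i n = 0) (hv : ∀ i n, M ≤ n → v i n = 0) (m : ℕ) {ε δ : ℝ}
    (hε : 0 < ε) (hδ : 0 < δ) :
    ∃ u, ‖u - u₀‖ < δ ∧ ∀ lam ∈ K, u ∈ powerReturnSet (T lam) m v ε := by
  have : Nontrivial (lpC p) := nontrivial_lp
  have : PerfectSpace (ι → lpC p) := perfectSpace_of_module ℂ _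
  have hρ : 0 < ε / (‖v‖ + ε) := by positivity
  obtain ⟨g, hg⟩ := hw.exists_majorant hK hTc hT m M (‖v‖ + ε)
  have tendsto_tail : Tendsto (fun L => ‖fun i => lpTail L (g i)‖) atTop (𝓝 0) := by
    simpa using (tendsto_pi_nhds.2 fun i => tendsto_lpTail hp (g i)).norm
  obtain ⟨L, hLM, hLδ, hLρ⟩ := ((eventually_ge_atTop M).and
    ((tendsto_tail.eventually_lt_const hδ).and (tendsto_tail.eventually_lt_const hρ))).exists
  choose h norm_h_le h_pow using fun i => exists_lp_truncated_root (x i) (lpTail L (g i)) m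
  have norm_h_le_tail : ‖h‖ ≤ ‖fun i => lpTail L (g i)‖ := pi_lp_norm_mono norm_h_le
  refine ⟨u₀ + h, by simpa using norm_h_le_tail.trans_lt hLδ, fun lam hlam => ?_⟩
  obtain ⟨N, hLN, hN⟩ := (frequently_mem_of_dense_range (hx lam hlam) Metric.isOpen_ball
    ⟨v, Metric.mem_ball_self hε⟩).forall_exists_of_atTop L
  rw [mem_ball_iff_norm] at hN
  have u_eq_h (i : ι) (n : ℕ) : (u₀ + h) i (n + (N + 1)) = h i (n + (N + 1)) := by
    simp [hu₀ i (n + (N + 1)) (by lia)]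
  refine (hT lam hlam).mem_powerReturnSet hρ (div_mul_cancel₀ _ (by positivity)).le hN
    (fun i n => ?_) fun i n => ?_
  · rw [u_eq_h, h_pow]
    split_ifs with hxg
    · exact .inl rfl
    · refine .inr ⟨rfl, hv i n (not_lt.1 fun hnM => hxg ?_)⟩
      rw [lpTail_apply, if_pos (by lia)]
      exact hg lam hlam (N + 1) x
        ((norm_le_norm_add_norm_sub' _ v).trans (by gcongr)) i n hnM
  · rw [u_eq_h]
    exact (norm_apply_apply_le_norm h i _).trans (norm_h_le_tail.trans hLρ.le)

lemma dense_biInter_powerReturnSet (hp : p ≠ ⊤) (hK : IsCompact K) (hTc : ContinuousOn T K)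
    (hT : ∀ lam ∈ K, IsWeightedShift (w lam) (T lam)) (hw : HasSummableRoots p w K)
    {x : ι → lpC p} (hx : ∀ lam ∈ K, Dense (Set.range fun n : ℕ => (T lam ^ (n + 1)) x)) (m : ℕ)
    (v : ι → lpC p) {ε : ℝ} (hε : 0 < ε) : Dense (⋂ lam ∈ K, powerReturnSet (T lam) m v ε) := by
  refine ((dense_setOf_eventually_zero hp).mono ?_).of_closure
  rintro u₀ ⟨M, hu₀⟩
  obtain ⟨v', ⟨M', hv'⟩, hvv'⟩ :=
    (dense_setOf_eventually_zero (ι := ι) (E := fun _ => ℂ) hp).exists_dist_lt v (half_pos hε)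
  rw [dist_comm, dist_eq_norm] at hvv'
  refine Metric.mem_closure_iff.2 fun δ hδ => ?_
  obtain ⟨u, huu₀, hu⟩ := exists_norm_sub_lt_mem_powerReturnSet hp hK hTc hT hw hx
    (fun i n hn => hu₀ i n ((le_max_left M M').trans hn))
    (fun i n hn => hv' i n ((le_max_right M M').trans hn)) m (half_pos hε) hδ
  exact ⟨u, Set.mem_iInter₂.2 fun lam hlam =>
    powerReturnSet_subset _ m (by linarith) (hu lam hlam), by rwa [dist_comm, dist_eq_norm]⟩

lemma eventually_residual_mem_powerReturnSet (hp : p ≠ ⊤) {Λ : Set X} (hΛ : IsSigmaCompact Λ)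
    (hTc : ContinuousOn T Λ) (hT : ∀ lam ∈ Λ, IsWeightedShift (w lam) (T lam))
    (hw : ∀ K ⊆ Λ, IsCompact K → HasSummableRoots p w K) {x : ι → lpC p}
    (hx : ∀ lam ∈ Λ, Dense (Set.range fun n : ℕ => (T lam ^ (n + 1)) x)) :
    ∀ᶠ u in residual (ι → lpC p), ∀ lam ∈ Λ, ∀ (m : ℕ) (v : ι → lpC p) (ε : ℝ), 0 < ε →
      u ∈ powerReturnSet (T lam) m v ε := by
  rcases Λ.eq_empty_or_nonempty with rfl | ⟨a, ha⟩
  · simp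
  obtain ⟨K, hK, hKΛ⟩ := hΛ
  have hsub (s : ℕ) : K s ⊆ Λ := hKΛ ▸ Set.subset_iUnion K s
  have eventually_orbit (s m k r : ℕ) : ∀ᶠ u in residual (ι → lpC p),
      u ∈ ⋂ lam ∈ K s, powerReturnSet (T lam) m ((T a ^ (k + 1)) x) (1 / ((r : ℝ) + 1)) :=
    residual_of_dense_open
      (isOpen_biInter_powerReturnSet (hK s) (hTc.mono (hsub s)) m _ _)
      (dense_biInter_powerReturnSet hp (hK s) (hTc.mono (hsub s)) (fun lam h => hT lam (hsub s h))
        (hw _ (hsub s) (hK s)) (fun lam h => hx lam (hsub s h)) m _ Nat.one_div_pos_of_nat)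
  simp only [← eventually_countable_forall] at eventually_orbit
  filter_upwards [eventually_orbit] with u hu lam hlam m v ε hε
  obtain ⟨s, hs⟩ := Set.mem_iUnion.1 (hKΛ ▸ hlam)
  obtain ⟨_, ⟨k, rfl⟩, hk⟩ := (hx a ha).exists_dist_lt v (half_pos hε)
  obtain ⟨r, hr⟩ := exists_nat_one_div_lt (half_pos hε)
  rw [dist_comm, dist_eq_norm] at hk
  exact powerReturnSet_subset _ m (by linarith) (Set.mem_iInter₂.1 (hu s m k r) lam hs)

end Compact

end PowerReturn

/-! ### The algebra generated by one vector -/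

lemma exists_eq_X_pow_mul_C_add_X_mul {R : Type*} [CommRing R] {P : R[X]} (hP : P ≠ 0) :
    ∃ (m : ℕ) (c : R) (Q : R[X]), c ≠ 0 ∧ P = X ^ m * (C c + X * Q) := by
  obtain ⟨Q, hPQ, hXQ⟩ := exists_eq_pow_rootMultiplicity_mul_and_not_dvd P hP 0
  rw [C_0, sub_zero] at hPQ hXQ
  refine ⟨P.rootMultiplicity 0, Q.coeff 0, Q.divX, fun h => hXQ (X_dvd_iff.2 h), ?_⟩
  rw [add_comm, X_mul_divX_add, ← hPQ]

section GeneratedAlgebra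

variable {p : ℝ≥0∞} [Fact (1 ≤ p)] {ι : Type*}

/-- The non-unital algebra generated by `u` for the coordinatewise product. Its elements are the
polynomials in `u` without constant term, written as `u * P(u)`. -/
def generatedAlgebra (u : ι → lpC p) : Set (ι → lpC p) :=
  {x | ∃ P : ℂ[X], ∀ i n, x i n = u i n * P.eval (u i n)}

lemma exists_norm_sub_le_of_mem_generatedAlgebra [Finite ι] {u x : ι → lpC p}
    (hx : x ∈ generatedAlgebra u) (hx0 : x ≠ 0) : ∃ (m : ℕ) (c : ℂ) (B : ℝ), c ≠ 0 ∧ 0 ≤ B ∧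
      ∀ i n, ‖x i n - c * u i n ^ (m + 1)‖ ≤ B * ‖u i n ^ (m + 2)‖ := by
  have := Fintype.ofFinite ι
  obtain ⟨P, hP⟩ := hx
  have P_ne_zero : P ≠ 0 := by
    rintro rfl
    exact hx0 (funext fun i => lp.ext (funext fun n => by simp [hP]))
  obtain ⟨m, c, Q, hc, rfl⟩ := exists_eq_X_pow_mul_C_add_X_mul P_ne_zero
  obtain ⟨B, hB⟩ := (isCompact_closedBall (0 : ℂ) ‖u‖).exists_bound_of_continuousOn
    Q.continuous.continuousOn
  refine ⟨m, c, B, hc, (norm_nonneg _).trans (hB 0 (by simp)), fun i n => ?_⟩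
  calc
    ‖x i n - c * u i n ^ (m + 1)‖ = ‖Q.eval (u i n) * u i n ^ (m + 2)‖ := by
      rw [hP]
      simp only [eval_mul, eval_pow, eval_X, eval_add, eval_C]
      ring_nf
    _ ≤ B * ‖u i n ^ (m + 2)‖ := by
      rw [norm_mul]
      gcongr
      exact hB _ (mem_closedBall_zero_iff.2 (norm_apply_apply_le_norm u i n))

lemma IsWeightedShift.dense_range_pow [Fintype ι] {w : ι → ℕ → ℂ}
    {T : (ι → lpC p) →L[ℂ] (ι → lpC p)} (hT : IsWeightedShift w T) {u x : ι → lpC p} {m : ℕ}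
    (hu : ∀ (v : ι → lpC p) (ε : ℝ), 0 < ε → u ∈ powerReturnSet T m v ε) {c : ℂ} (hc : c ≠ 0)
    {B : ℝ} (hB : 0 ≤ B) (hx : ∀ i n, ‖x i n - c * u i n ^ (m + 1)‖ ≤ B * ‖u i n ^ (m + 2)‖) :
    Dense (Set.range fun n : ℕ => (T ^ (n + 1)) x) := by
  refine Metric.dense_iff.2 fun v ε hε => ?_
  obtain ⟨N, hv, h0⟩ := hu (c⁻¹ • v) (ε / (‖c‖ + B)) (by positivity)
  have norm_error_le : ‖(T ^ (N + 1)) (x - c • (lpPowSucc m ∘ u))‖ ≤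
      B * ‖(T ^ (N + 1)) (lpPowSucc (m + 1) ∘ u)‖ := hT.norm_pow_le _ hB fun i n => by
    change ‖x i (n + (N + 1)) - c * lpPowSucc m (u i) (n + (N + 1))‖ ≤ _
    rw [Function.comp_apply, lpPowSucc_apply, lpPowSucc_apply]
    exact hx i (n + (N + 1))
  have split_orbit : (T ^ (N + 1)) x - v = c • ((T ^ (N + 1)) (lpPowSucc m ∘ u) - c⁻¹ • v) +
      (T ^ (N + 1)) (x - c • (lpPowSucc m ∘ u)) := by
    rw [map_sub, map_smul, smul_sub, smul_inv_smul₀ hc]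
    abel
  refine ⟨_, mem_ball_iff_norm.2 ?_, ⟨N, rfl⟩⟩
  calc
    ‖(T ^ (N + 1)) x - v‖ ≤ ‖c‖ * ‖(T ^ (N + 1)) (lpPowSucc m ∘ u) - c⁻¹ • v‖ +
        B * ‖(T ^ (N + 1)) (lpPowSucc (m + 1) ∘ u)‖ := by
      rw [split_orbit, ← norm_smul]
      exact (norm_add_le _ _).trans (by gcongr)
    _ < ‖c‖ * (ε / (‖c‖ + B)) + B * (ε / (‖c‖ + B)) :=
      add_lt_add_of_lt_of_le (by gcongr) (by gcongr)
    _ = ε := by field_simp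

end GeneratedAlgebra

section CommonAlgebra

variable {p : ℝ≥0∞} [Fact (1 ≤ p)] {d : ℕ} {Λ : Set (Fin d → ℝ)}
  {T : (Fin d → ℝ) → (Fin d → lpC p) →L[ℂ] (Fin d → lpC p)}

lemma commonHypercyclicAlgebraCW_of_generatedAlgebra {u : Fin d → lpC p} (hu0 : u ≠ 0)
    (hu : ∀ x ∈ generatedAlgebra u, x ≠ 0 → ∀ lam ∈ Λ,
      Dense (Set.range fun n : ℕ => (T lam ^ (n + 1)) x)) :
    CommonHypercyclicAlgebraCW p d Λ T := by
  refine ⟨generatedAlgebra u, ⟨0, by simp⟩, ?_, ?_, ?_, ⟨u, ⟨1, by simp⟩, hu0⟩, hu⟩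
  · rintro x ⟨P, hP⟩ y ⟨Q, hQ⟩
    refine ⟨P + Q, fun i n => ?_⟩
    change x i n + y i n = _
    rw [hP, hQ, eval_add, mul_add]
  · rintro c x ⟨P, hP⟩
    refine ⟨C c * P, fun i n => ?_⟩
    change c * x i n = _
    rw [hP, eval_mul, eval_C, mul_left_comm]
  · rintro x ⟨P, hP⟩ y ⟨Q, hQ⟩
    refine ⟨fun i => lpMul (x i) (y i), ⟨P * X * Q, fun i n => ?_⟩, fun _ _ => rfl⟩
    rw [lpMul_apply, hP, hQ, eval_mul, eval_mul, eval_X]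
    ring

theorem stmt_9_general (hd : 1 ≤ d) (hp : p ≠ ⊤) (hΛ : IsSigmaCompact Λ)
    {w : (Fin d → ℝ) → Fin d → ℕ → ℂ} (hT : ∀ lam ∈ Λ, IsWeightedShift (w lam) (T lam))
    (hTc : ContinuousOn T Λ) (hw : ∀ K ⊆ Λ, IsCompact K → HasSummableRoots p w K) :
    (∃ x : Fin d → lpC p, ∀ lam ∈ Λ, Dense (Set.range fun n : ℕ => ((T lam) ^ (n + 1)) x)) ↔
      CommonHypercyclicAlgebraCW p d Λ T := by
  refine ⟨fun ⟨x, hx⟩ => ?_, fun ⟨_, _, _, _, _, ⟨x, hxA, hx0⟩, hA⟩ => ⟨x, hA x hxA hx0⟩⟩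
  have : Nonempty (Fin d) := ⟨0, hd⟩
  have : Nontrivial (lpC p) := nontrivial_lp
  obtain ⟨u, hu0, hu⟩ := (dense_of_mem_residual
    (eventually_residual_mem_powerReturnSet hp hΛ hTc hT hw hx)).inter_open_nonempty
    {0}ᶜ isOpen_compl_singleton (Set.nonempty_compl_of_nontrivial 0)
  refine commonHypercyclicAlgebraCW_of_generatedAlgebra hu0 fun y hy hy0 lam hlam => ?_
  obtain ⟨m, c, B, hc, hB, hyu⟩ := exists_norm_sub_le_of_mem_generatedAlgebra hy hy0
  exact (hT lam hlam).dense_range_pow (hu lam hlam m) hc hB hyu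

end CommonAlgebra

/-! ### The weights `exp (a * (n ^ α - (n - 1) ^ α))` -/

lemma rpow_add_one_sub_rpow_mem_Icc {α x : ℝ} (hα0 : 0 ≤ α) (hα1 : α ≤ 1) (hx : 0 ≤ x) :
    (x + 1) ^ α - x ^ α ∈ Set.Icc 0 1 := by
  refine ⟨sub_nonneg.2 (by gcongr; linarith), ?_⟩
  have := Real.rpow_add_le_add_rpow hx zero_le_one hα0 hα1
  rw [Real.one_rpow] at this
  linarith

lemma abs_exp_sub_exp_le (s t : ℝ) :
    |Real.exp t - Real.exp s| ≤ (Real.exp |t - s| - 1) * Real.exp s := by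
  have abs_exp_sub_one_le (r : ℝ) : |Real.exp r - 1| ≤ Real.exp |r| - 1 :=
    calc
      |Real.exp r - 1| = ‖Complex.exp r - 1‖ := by
        rw [← Complex.ofReal_exp, ← Complex.ofReal_one, ← Complex.ofReal_sub, Complex.norm_real,
          Real.norm_eq_abs]
      _ ≤ Real.exp |r| - 1 := by simpa using Complex.norm_exp_sub_sum_le_exp_norm_sub_sum r 1
  calc
    |Real.exp t - Real.exp s| = |Real.exp (t - s) - 1| * Real.exp s := by
      rw [← abs_of_pos (Real.exp_pos s), ← abs_mul, abs_of_pos (Real.exp_pos s), sub_one_mul,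
        ← Real.exp_add, sub_add_cancel]
    _ ≤ (Real.exp |t - s| - 1) * Real.exp s := by gcongr; exact abs_exp_sub_one_le _

lemma wExp_pos (α a : ℝ) (n : ℕ) : 0 < wExp α a n := Real.exp_pos _

lemma abs_wExp_succ_sub_le {α : ℝ} (hα0 : 0 ≤ α) (hα1 : α ≤ 1) (a b : ℝ) (n : ℕ) :
    |wExp α b (n + 1) - wExp α a (n + 1)| ≤ (Real.exp |b - a| - 1) * wExp α a (n + 1) := by
  obtain ⟨h0, h1⟩ := rpow_add_one_sub_rpow_mem_Icc hα0 hα1 n.cast_nonneg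
  simp only [wExp, Nat.cast_add_one, add_sub_cancel_right]
  refine (abs_exp_sub_exp_le _ _).trans ?_
  rw [← sub_mul, abs_mul, abs_of_nonneg h0]
  gcongr
  exact mul_le_of_le_one_right (abs_nonneg _) h1

lemma prod_wExp_succ {α : ℝ} (hα : α ≠ 0) (a : ℝ) (n : ℕ) :
    ∏ k ∈ range n, wExp α a (k + 1) = Real.exp (a * (n : ℝ) ^ α) := by
  simp only [wExp, Nat.cast_add_one, add_sub_cancel_right]
  have telescope := Finset.sum_range_sub (fun k : ℕ => (k : ℝ) ^ α) n
  simp only [Nat.cast_add_one, Nat.cast_zero, Real.zero_rpow hα, sub_zero] at telescope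
  rw [← Real.exp_sum, ← Finset.mul_sum, telescope]

lemma summable_exp_neg_mul_rpow {α c : ℝ} (hα : 0 < α) (hc : 0 < c) :
    Summable fun n : ℕ => Real.exp (-c * (n : ℝ) ^ α) := by
  have isLittleO := (isLittleO_exp_neg_mul_rpow_atTop hc (-2 / α)).comp_tendsto
    ((tendsto_rpow_atTop hα).comp tendsto_natCast_atTop_atTop)
  refine summable_of_isBigO_nat (Real.summable_nat_rpow.2 (by norm_num : (-2 : ℝ) < -1))
    (isLittleO.isBigO.congr_right fun n => ?_)
  rw [Function.comp_apply, Function.comp_apply, ← Real.rpow_mul n.cast_nonneg,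
    mul_div_cancel₀ _ hα.ne']

section ExpWeights

variable {p : ℝ≥0∞} [Fact (1 ≤ p)]

lemma memℓp_exp_neg_mul_rpow {α c : ℝ} (hα : 0 < α) (hc : 0 < c) :
    Memℓp (fun n : ℕ => (Real.exp (-c * (n : ℝ) ^ α) : ℂ)) p := by
  refine Memℓp.of_exponent_ge (memℓp_gen (p := 1) ?_) Fact.out
  simpa only [ENNReal.toReal_one, Real.rpow_one, Complex.norm_real, Real.norm_eq_abs,
    Real.abs_exp] using summable_exp_neg_mul_rpow hα hc

lemma continuousOn_of_isWeightedShift_wExp {ι : Type*} [Finite ι] {α : ℝ} (hα0 : 0 ≤ α)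
    (hα1 : α ≤ 1) {Λ : Set (ι → ℝ)} {T : (ι → ℝ) → (ι → lpC p) →L[ℂ] (ι → lpC p)}
    (hT : ∀ lam ∈ Λ, IsWeightedShift (fun i n => (wExp α (lam i) n : ℂ)) (T lam)) :
    ContinuousOn T Λ := by
  have := Fintype.ofFinite ι
  intro a ha
  have norm_sub_le (b) (hb : b ∈ Λ) : ‖T b - T a‖ ≤ (Real.exp ‖b - a‖ - 1) * ‖T a‖ :=
    (hT a ha).norm_sub_le (hT b hb)
      (sub_nonneg.2 (Real.one_le_exp (norm_nonneg _))) fun i n => by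
        rw [← Complex.ofReal_sub, Complex.norm_real, Complex.norm_real,
          Real.norm_of_nonneg (wExp_pos α (a i) (n + 1)).le]
        refine (abs_wExp_succ_sub_le hα0 hα1 _ _ n).trans ?_
        gcongr
        exacts [(wExp_pos _ _ _).le, norm_le_pi_norm (b - a) i]
  have tendsto_bound : Tendsto (fun b => (Real.exp ‖b - a‖ - 1) * ‖T a‖) (𝓝[Λ] a) (𝓝 0) := by
    have : Continuous fun b : ι → ℝ => (Real.exp ‖b - a‖ - 1) * ‖T a‖ := by fun_prop
    simpa using (this.tendsto a).mono_left nhdsWithin_le_nhds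
  exact tendsto_iff_norm_sub_tendsto_zero.2 (squeeze_zero' (.of_forall fun _ => norm_nonneg _)
    (eventually_nhdsWithin_of_forall norm_sub_le) tendsto_bound)

lemma hasSummableRoots_wExp {ι : Type*} {α : ℝ} (hα : 0 < α) {K : Set (ι → ℝ)} (hK : IsCompact K)
    (hpos : ∀ lam ∈ K, ∀ i, 0 < lam i) :
    HasSummableRoots p (fun lam i n => (wExp α (lam i) n : ℂ)) K := by
  intro i k
  obtain ⟨a, ha, ha_le⟩ :=
    hK.exists_forall_le' (continuous_apply i).continuousOn fun lam hlam => hpos lam hlam i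
  refine ⟨⟨_, memℓp_exp_neg_mul_rpow (c := a / (k + 1)) hα (by positivity)⟩, fun lam hlam n => ?_⟩
  change 1 ≤ ‖∏ j ∈ range n, (wExp α (lam i) (j + 1) : ℂ)‖ *
    ‖(Real.exp (-(a / (k + 1)) * (n : ℝ) ^ α) : ℂ)‖ ^ (k + 1)
  rw [← Complex.ofReal_prod, prod_wExp_succ hα.ne', Complex.norm_real, Complex.norm_real,
    Real.norm_of_nonneg (Real.exp_nonneg _), Real.norm_of_nonneg (Real.exp_nonneg _),
    ← Real.exp_nat_mul, ← Real.exp_add]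
  refine Real.one_le_exp ?_
  calc
    0 ≤ (lam i - a) * (n : ℝ) ^ α := mul_nonneg (sub_nonneg.2 (ha_le lam hlam)) (by positivity)
    _ = lam i * (n : ℝ) ^ α + ((k + 1 : ℕ) : ℝ) * (-(a / (k + 1)) * (n : ℝ) ^ α) := by
      push_cast
      field_simp
      ring

end ExpWeights

/-- Proposition 1.3 / Proposition 2.10 of the paper, case `X = ℓᵖ(ℕ)`:
for `w 1 (a) ⋯ w n (a) = exp (a n^α)`, common hypercyclic vectors and common hypercyclic
algebras (coordinatewise product) exist simultaneously. -/
theorem stmt_9 (d : ℕ) (hd : 1 ≤ d) (α : ℝ) (hα0 : 0 < α) (hα1 : α ≤ 1)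
    (p : ℝ≥0∞) [Fact (1 ≤ p)] (hp : p ≠ ⊤)
    (Λ : Set (Fin d → ℝ)) (hΛpos : ∀ lam ∈ Λ, ∀ i, 0 < lam i) (hΛσ : IsSigmaCompact Λ)
    (T : (Fin d → ℝ) → ((Fin d → lpC p) →L[ℂ] (Fin d → lpC p)))
    (hT : ∀ lam ∈ Λ, IsProductShift p d (wExp α) (T lam) lam) :
    (∃ x : Fin d → lpC p, ∀ lam ∈ Λ,
        Dense (Set.range fun n : ℕ => ((T lam) ^ (n + 1)) x)) ↔
      CommonHypercyclicAlgebraCW p d Λ T := by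
  have hTw : ∀ lam ∈ Λ, IsWeightedShift (fun i n => (wExp α (lam i) n : ℂ)) (T lam) := hT
  exact stmt_9_general hd hp hΛσ hTw (continuousOn_of_isWeightedShift_wExp hα0.le hα1 hTw)
    fun _ hKΛ hK => hasSummableRoots_wExp hα0 hK fun lam hlam => hΛpos lam (hKΛ hlam)
end
end

section
/- Let d ≥ 1 be an integer, α ∈ (0,1], and for a > 0 let w(a) be the positive weight sequence determined by w_1(a)⋯w_n(a) = exp(a·n^α) for all n ≥ 1 (that is, w_n(a) = exp(a(n^α − (n−1)^α))). Let Λ ⊂ (0,∞)^d be σ-compact. Then the following are equivalent: (a) the family (B_{w(λ(1))} × ⋯ × B_{w(λ(d))})_{λ∈Λ} has a common hypercyclic vector in c₀(ℕ)^d; (b) the family (B_{w(λ(1))} × ⋯ × B_{w(λ(d))})_{λ∈Λ} has a common hypercyclic algebra in c₀(ℕ)^d for the coordinatewise product. -/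
open scoped ENNReal ZeroAtInfty
open Finset

noncomputable section

/-- The space `c₀(ℕ)` of complex sequences vanishing at infinity, with the sup norm. -/
abbrev c0C : Type := C₀(ℕ, ℂ)

/-- `T` is the product operator `B_{w(lam 0)} × ⋯ × B_{w(lam (d-1))}` of weighted backward
shifts, the weight sequence of the `i`-th factor being `(w (lam i) n)_{n ≥ 1}`. -/
def IsProductShiftC0 (d : ℕ) (w : ℝ → ℕ → ℝ)
    (T : (Fin d → c0C) →L[ℂ] (Fin d → c0C)) (lam : Fin d → ℝ) : Prop :=
  ∀ (v : Fin d → c0C) (i : Fin d) (n : ℕ),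
    (T v) i n = (w (lam i) (n + 1) : ℂ) * v i (n + 1)

/-- The family `T lam`, `lam ∈ S`, admits a common hypercyclic algebra for the coordinatewise
product: there is a non-unital subalgebra `A ≠ {0}` of `(c₀(ℕ))^d` (closed under addition,
scalar multiplication and the componentwise coordinatewise product) every nonzero element of
which is a common hypercyclic vector for the family. -/
def CommonHypercyclicAlgebraCWC0 (d : ℕ) (S : Set (Fin d → ℝ))
    (T : (Fin d → ℝ) → ((Fin d → c0C) →L[ℂ] (Fin d → c0C))) : Prop :=
  ∃ A : Set (Fin d → c0C),
    (0 : Fin d → c0C) ∈ A ∧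
    (∀ x ∈ A, ∀ y ∈ A, x + y ∈ A) ∧
    (∀ (c : ℂ), ∀ x ∈ A, c • x ∈ A) ∧
    (∀ x ∈ A, ∀ y ∈ A, ∃ z ∈ A, ∀ (i : Fin d) (n : ℕ), z i n = x i n * y i n) ∧
    (∃ x ∈ A, x ≠ 0) ∧
    (∀ x ∈ A, x ≠ 0 → ∀ lam ∈ S, Dense (Set.range fun n : ℕ => ((T lam) ^ (n + 1)) x))

/-!
Write `B_λ` for the product of the shifts with parameters `λ(1), …, λ(d)`. Two semiconjugacies drive
the proof.

* Coordinatewise, the radial homeomorphism `r e^{iθ} ↦ r ^ t e^{iθ}` of `ℂ` conjugates `B_λ` to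
  `B_{tλ}`. A common hypercyclic vector for `Λ` thus yields one for each `Λ / (m + 1)`. Adding
  finitely supported vectors makes these vectors dense, and `σ`-compactness of `Λ` makes them a
  `G_δ`, so by Baire's theorem some `y ≠ 0` is hypercyclic for all `B_{λ / (m + 1)}`, `λ ∈ Λ`,
  `m ∈ ℕ`.
* Let `P = X ^ (m + 1) (b + X q)` with `b ≠ 0`. Since the weights of `B_λ` are the `(m + 1)`-st
  powers of those of `B_{λ / (m + 1)}`, the vector `B_λ ^ N P(y)` equals `u ^ (m + 1) (b + r q(r))`,
  where `u = B_{λ / (m + 1)} ^ N y` and `r → 0` is the unweighted shift of `y` by `N` places.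
  Hence `P(y)` is hypercyclic for `B_λ`.

The algebra consists of the `P(y)` with `P` a polynomial without constant term.
-/

open Filter Topology Function
open scoped BoundedContinuousFunction

section Dynamics

variable {X Y Z P : Type*} [TopologicalSpace X] [TopologicalSpace Y] [TopologicalSpace Z]
  [TopologicalSpace P]

/-- Every point of the space is a cluster point of the forward orbit of `x` under `f`. In a `T1`
space without isolated points this is density of the orbit, with or without its first terms. -/
def IsHypercyclicPoint (f : X → X) (x : X) : Prop :=
  ∀ z, MapClusterPt z atTop fun n => f^[n] x

lemma dense_range_iterate_succ_iff [T1Space X] [∀ x : X, NeBot (𝓝[≠] x)] {f : X → X} {x : X} :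
    Dense (Set.range fun n => f^[n + 1] x) ↔ IsHypercyclicPoint f x := by
  refine ⟨fun h z => mapClusterPt_iff_frequently.2 fun s hs => frequently_atTop.2 fun M => ?_,
    fun h z => mem_closure_iff_nhds.2 fun s hs => ?_⟩
  · have hdense := h.sdiff_finite ((Set.finite_Iio M).image fun n => f^[n + 1] x)
    obtain ⟨_, hys, ⟨n, rfl⟩, hn⟩ := mem_closure_iff_nhds.1 (hdense z) s hs
    exact ⟨n + 1, by by_contra! hlt; exact hn ⟨n, by simp only [Set.mem_Iio]; omega, rfl⟩, hys⟩
  · obtain ⟨n, hn, hns⟩ := frequently_atTop.1 ((h z).frequently hs) 1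
    exact ⟨_, hns, n - 1, by simp only [Nat.sub_add_cancel hn]⟩

lemma isHypercyclicPoint_iff_countableBasis [SecondCountableTopology X] {f : X → X} {x : X} :
    IsHypercyclicPoint f x ↔
      ∀ U ∈ TopologicalSpace.countableBasis X, ∀ M, ∃ n, M ≤ n ∧ f^[n] x ∈ U := by
  refine ⟨fun h U hU => frequently_atTop.1 ?_, fun h z => ?_⟩
  · obtain ⟨z, hz⟩ := TopologicalSpace.nonempty_of_mem_countableBasis hU
    exact (h z).frequently ((TopologicalSpace.isOpen_of_mem_countableBasis hU).mem_nhds hz)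
  · refine ((TopologicalSpace.isBasis_countableBasis X).nhds_hasBasis).mapClusterPt_iff_frequently.2
      fun U hU => frequently_atTop.2 (h U hU.1)

namespace IsHypercyclicPoint

variable {f : X → X} {x : X}

lemma congr {y : X} (h : IsHypercyclicPoint f x)
    (hxy : ∀ᶠ n in atTop, f^[n] x = f^[n] y) : IsHypercyclicPoint f y :=
  fun z => (h z).congrFun hxy

lemma map_of_semiconj_prodMap {g : Y → Y} {k : Z → Z} {Φ : X × Y → Z} {y y₀ : Y}
    (h : IsHypercyclicPoint f x) (hy : Tendsto (fun n => g^[n] y) atTop (𝓝 y₀))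
    (hΦ : Continuous Φ) (hsemi : Semiconj Φ (Prod.map f g) k)
    (hsurj : ∀ z, ∃ x', Φ (x', y₀) = z) : IsHypercyclicPoint k (Φ (x, y)) := by
  intro z
  obtain ⟨x', rfl⟩ := hsurj z
  have hpair : MapClusterPt (x', y₀) atTop fun n => (f^[n] x, g^[n] y) := by
    refine ((𝓝 x').basis_sets.prod_nhds (𝓝 y₀).basis_sets).mapClusterPt_iff_frequently.2 ?_
    exact fun s hs => ((h x').frequently hs.1).and_eventually (hy hs.2)
  refine (hpair.continuousAt_comp hΦ.continuousAt).congrFun (.of_forall fun n => ?_)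
  simpa using hsemi.iterate_right n (x, y)

lemma map_of_semiconj {g : Y → Y} {Φ : X → Y} (h : IsHypercyclicPoint f x)
    (hsemi : Semiconj Φ f g) (hΦ : Continuous Φ) (hsurj : Surjective Φ) :
    IsHypercyclicPoint g (Φ x) := by
  intro z
  obtain ⟨x', rfl⟩ := hsurj z
  exact ((h x').continuousAt_comp hΦ.continuousAt).congrFun
    (.of_forall fun n => hsemi.iterate_right n x)

end IsHypercyclicPoint

lemma continuous_iterate_apply {f : P → X → X} (hf : Continuous (uncurry f)) (n : ℕ) :
    Continuous fun q : P × X => (f q.1)^[n] q.2 := by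
  induction n with
  | zero => exact continuous_snd
  | succ n ih =>
    simp only [iterate_succ_apply']
    exact hf.comp (continuous_fst.prodMk ih)

lemma isOpen_setOf_forall_exists_iterate_mem {f : P → X → X} (hf : Continuous (uncurry f))
    {K : Set P} (hK : IsCompact K) {U : Set X} (hU : IsOpen U) (M : ℕ) :
    IsOpen {x | ∀ p ∈ K, ∃ n, M ≤ n ∧ (f p)^[n] x ∈ U} := by
  refine isOpen_iff_eventually.2 fun x hx => hK.eventually_forall_of_forall_eventually
    (P := fun y p => ∃ n, M ≤ n ∧ (f p)^[n] y ∈ U) fun p hp => ?_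
  obtain ⟨n, hMn, hn⟩ := hx p hp
  have hcont : Continuous fun q : X × P => (f q.2)^[n] q.1 :=
    (continuous_iterate_apply hf n).comp continuous_swap
  filter_upwards [hcont.continuousAt (hU.mem_nhds hn)] with q hq using ⟨n, hMn, hq⟩

lemma isGδ_setOf_forall_isHypercyclicPoint [SecondCountableTopology X] {f : P → X → X}
    (hf : Continuous (uncurry f)) {S : Set P} (hS : IsSigmaCompact S) :
    IsGδ {x | ∀ p ∈ S, IsHypercyclicPoint (f p) x} := by
  obtain ⟨K, hK, rfl⟩ := hS
  have hset : {x | ∀ p ∈ ⋃ j, K j, IsHypercyclicPoint (f p) x} =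
      ⋂ (j) (M), ⋂ U ∈ TopologicalSpace.countableBasis X,
        {x | ∀ p ∈ K j, ∃ n, M ≤ n ∧ (f p)^[n] x ∈ U} := by
    ext x
    simp only [Set.mem_iInter, Set.mem_ofPred_eq, Set.mem_iUnion,
      isHypercyclicPoint_iff_countableBasis]
    exact ⟨fun h j M U hU p hp => h p ⟨j, hp⟩ U hU M, fun h p ⟨j, hp⟩ U hU M => h j M U hU p hp⟩
  rw [hset]
  exact .iInter fun j => .iInter fun M =>
    .biInter_of_isOpen (TopologicalSpace.countable_countableBasis X) fun U hU =>
      isOpen_setOf_forall_exists_iterate_mem hf (hK j)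
        (TopologicalSpace.isOpen_of_mem_countableBasis hU) M

end Dynamics

section Superposition

variable {X X' Y P E F : Type*} [TopologicalSpace X] [TopologicalSpace X'] [TopologicalSpace Y]
  [TopologicalSpace P] [NormedAddCommGroup E] [NormedAddCommGroup F]

lemma norm_c0_apply_le (x : C₀(X, E)) (k : X) : ‖x k‖ ≤ ‖x‖ :=
  x.toBCF.norm_coe_le_norm k

lemma continuous_c0_of_forall_apply_eq [ProperSpace E] {g : P × Y × E → F} (hg : Continuous g)
    {K : Set Y} (hK : IsCompact K) {s : X → Y} (hs : ∀ k, s k ∈ K) (σ : X → X')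
    {Φ : P × C₀(X', E) → C₀(X, F)} (hΦ : ∀ p x k, Φ (p, x) k = g (p, s k, x (σ k))) :
    Continuous Φ := by
  refine continuous_iff_continuousAt.2 fun ⟨p₀, x₀⟩ =>
    ZeroAtInftyContinuousMap.tendsto_iff_tendstoUniformly.2 <|
      Metric.tendstoUniformly_iff.2 fun ε hε => ?_
  have hunif : ∀ᶠ q : P × E in 𝓝 (p₀, 0), ∀ y ∈ K ×ˢ Metric.closedBall (0 : E) ‖x₀‖,
      dist (g (p₀, y.1, y.2)) (g (q.1, y.1, y.2 + q.2)) < ε := by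
    refine (hK.prod (isCompact_closedBall _ _)).eventually_forall_of_forall_eventually
      (P := fun (q : P × E) (y : Y × E) =>
        dist (g (p₀, y.1, y.2)) (g (q.1, y.1, y.2 + q.2)) < ε) fun y _ => ?_
    have hdist : Continuous fun r : (P × E) × (Y × E) =>
        dist (g (p₀, r.2.1, r.2.2)) (g (r.1.1, r.2.1, r.2.2 + r.1.2)) := by fun_prop
    exact hdist.continuousAt.eventually_lt_const (by simpa using hε)
  rw [nhds_prod_eq, eventually_prod_iff] at hunif
  obtain ⟨near_p, hp, small, hsmall, hnear⟩ := hunif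
  obtain ⟨δ, hδ, hball⟩ := Metric.eventually_nhds_iff.1 hsmall
  rw [nhds_prod_eq]
  filter_upwards [hp.prod_mk (Metric.ball_mem_nhds x₀ hδ)] with ⟨p, x⟩ ⟨hp, hx⟩ k
  have hk : small (x (σ k) - x₀ (σ k)) := hball <| by
    rw [dist_zero_right]
    exact (norm_c0_apply_le (x - x₀) (σ k)).trans_lt (mem_ball_iff_norm.1 hx)
  simpa [hΦ] using hnear hp hk (s k, x₀ (σ k))
    ⟨hs k, mem_closedBall_zero_iff.2 (norm_c0_apply_le x₀ (σ k))⟩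

end Superposition

section NullSequences

/-- The element of `c₀(ℕ)` with the given terms. -/
def c0OfTendsto (u : ℕ → ℂ) (hu : Tendsto u atTop (𝓝 0)) : c0C where
  toFun := u
  continuous_toFun := continuous_of_discreteTopology
  zero_at_infty' := by rwa [cocompact_eq_cofinite, Nat.cofinite_eq_atTop]

lemma tendsto_c0_atTop (x : c0C) : Tendsto x atTop (𝓝 0) := by
  rw [← Nat.cofinite_eq_atTop, ← cocompact_eq_cofinite]
  exact zero_at_infty x

lemma exists_forall_ge_norm_c0_apply_lt (x : c0C) {ε : ℝ} (hε : 0 < ε) :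
    ∃ M, ∀ n, M ≤ n → ‖x n‖ < ε := by
  simpa only [dist_zero_right, ge_iff_le] using
    Metric.tendsto_atTop.1 (tendsto_c0_atTop x) ε hε

/-- The canonical basis `(e_n)` of `c₀(ℕ)`. -/
def c0Single (n : ℕ) : c0C :=
  c0OfTendsto (Pi.single n (1 : ℂ)) <| tendsto_const_nhds.congr' <| by
    filter_upwards [eventually_gt_atTop n] with k hk
    exact (Pi.single_eq_of_ne (M := fun _ => ℂ) hk.ne' 1).symm

@[simp]
lemma c0Single_apply (n k : ℕ) : c0Single n k = (Pi.single n 1 : ℕ → ℂ) k := rfl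

instance : Nontrivial c0C :=
  ⟨c0Single 0, 0, fun h => by simpa using DFunLike.congr_fun h 0⟩

lemma sum_smul_c0Single_apply (x : c0C) (M n : ℕ) :
    (∑ k ∈ range M, x k • c0Single k) n = if n < M then x n else 0 := by
  induction M with
  | zero => simp
  | succ M ih =>
    rw [sum_range_succ, ZeroAtInftyContinuousMap.add_apply, ih]
    rcases lt_trichotomy n M with h | rfl | h
    · simp [h, h.ne, h.trans M.lt_succ_self]
    · simp
    · simp [h.ne', h.not_gt, h.not_ge]

lemma tendsto_sum_smul_c0Single (x : c0C) :
    Tendsto (fun M => ∑ k ∈ range M, x k • c0Single k) atTop (𝓝 x) := by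
  refine ZeroAtInftyContinuousMap.tendsto_iff_tendstoUniformly.2 <|
    Metric.tendstoUniformly_iff.2 fun ε hε => ?_
  obtain ⟨M₀, hM₀⟩ := exists_forall_ge_norm_c0_apply_lt x hε
  filter_upwards [eventually_ge_atTop M₀] with M hM n
  rw [sum_smul_c0Single_apply]
  split_ifs with hn
  · simpa using hε
  · simpa using hM₀ n (by omega)

lemma dense_span_c0Single : Dense (Submodule.span ℂ (Set.range c0Single) : Set c0C) :=
  fun x => mem_closure_of_tendsto (tendsto_sum_smul_c0Single x) <| .of_forall fun _ =>
    Submodule.sum_mem _ fun k _ => Submodule.smul_mem _ _ (Submodule.subset_span ⟨k, rfl⟩)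

instance : SecondCountableTopology c0C := by
  have hsep := (Set.countable_range c0Single).isSeparable.span (R := ℂ) |>.closure
  rw [dense_span_c0Single.closure_eq, TopologicalSpace.isSeparable_univ_iff] at hsep
  exact UniformSpace.secondCountable_of_separable c0C

lemma eventually_apply_eq_zero_of_mem_span_c0Single {u : c0C}
    (hu : u ∈ Submodule.span ℂ (Set.range c0Single)) : ∀ᶠ n in atTop, u n = 0 := by
  induction hu using Submodule.span_induction with
  | mem u hu =>
    obtain ⟨k, rfl⟩ := hu
    filter_upwards [eventually_gt_atTop k] with n hn using Pi.single_eq_of_ne hn.ne' 1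
  | zero => simp
  | add u v _ _ hu hv => filter_upwards [hu, hv] with n hun hvn using by simp [hun, hvn]
  | smul a u _ hu => filter_upwards [hu] with n hun using by simp [hun]

end NullSequences

section Composition

/-- Composition `n ↦ f (x n)` of a null sequence with a function that is continuous and vanishes
at `0`. -/
def c0Comp (f : ℂ → ℂ) (hf : Tendsto f (𝓝 0) (𝓝 0)) (x : c0C) : c0C :=
  c0OfTendsto (fun n => f (x n)) (hf.comp (tendsto_c0_atTop x))

@[simp]
lemma c0Comp_apply (f : ℂ → ℂ) (hf : Tendsto f (𝓝 0) (𝓝 0)) (x : c0C) (n : ℕ) :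
    c0Comp f hf x n = f (x n) := rfl

lemma continuous_c0Comp {f : ℂ → ℂ} (hf₀ : Tendsto f (𝓝 0) (𝓝 0)) (hf : Continuous f) :
    Continuous (c0Comp f hf₀) := by
  have hprod : Continuous fun q : Unit × c0C => c0Comp f hf₀ q.2 :=
    continuous_c0_of_forall_apply_eq (g := fun q : Unit × Unit × ℂ => f q.2.2) (by fun_prop)
      isCompact_univ (s := fun _ => ()) (fun _ => Set.mem_univ _) id fun _ _ _ => rfl
  exact hprod.comp (Continuous.prodMk_right ())

lemma continuous_mul_eval (Q : Polynomial ℂ) : Continuous fun w => w * Q.eval w :=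
  continuous_id.mul Q.continuous

/-- The map `x ↦ x * Q(x)` on `c₀(ℕ)`, that is, evaluation at `x` of the polynomial `X * Q`: the
polynomials without constant term are the ones which act on the non-unital algebra `c₀(ℕ)`. -/
def c0XMulEval (Q : Polynomial ℂ) : c0C → c0C :=
  c0Comp (fun w => w * Q.eval w) (by simpa using (continuous_mul_eval Q).tendsto 0)

@[simp]
lemma c0XMulEval_apply (Q : Polynomial ℂ) (x : c0C) (n : ℕ) :
    c0XMulEval Q x n = x n * Q.eval (x n) := rfl

lemma continuous_c0XMulEval (Q : Polynomial ℂ) : Continuous (c0XMulEval Q) :=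
  continuous_c0Comp _ (continuous_mul_eval Q)

lemma surjective_c0XMulEval_X_pow (m : ℕ) : Surjective (c0XMulEval (.X ^ m)) := by
  intro x
  have hroot : Tendsto (fun w : ℂ => w ^ (((m + 1 : ℕ) : ℂ)⁻¹)) (𝓝 0) (𝓝 0) := by
    refine tendsto_zero_iff_norm_tendsto_zero.2 ?_
    simp_rw [Complex.norm_cpow_inv_nat]
    have hcont := continuous_norm (E := ℂ) |>.rpow_const (p := ((m + 1 : ℕ) : ℝ)⁻¹)
      fun _ => .inr (by positivity)
    simpa [Real.zero_rpow, show (m : ℝ) + 1 ≠ 0 by positivity] using hcont.tendsto 0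
  refine ⟨c0Comp _ hroot x, ZeroAtInftyContinuousMap.ext fun n => ?_⟩
  rw [c0XMulEval_apply, Polynomial.eval_pow, Polynomial.eval_X, ← pow_succ', c0Comp_apply,
    Complex.cpow_nat_inv_pow _ m.succ_ne_zero]

/-- The map `r e^{iθ} ↦ r ^ t e^{iθ}` of the complex plane. -/
def radialPow (t : ℝ) (w : ℂ) : ℂ := (‖w‖ ^ (t - 1) : ℝ) * w

@[simp]
lemma radialPow_zero (t : ℝ) : radialPow t 0 = 0 := by simp [radialPow]

lemma norm_radialPow {t : ℝ} (ht : t ≠ 0) (w : ℂ) : ‖radialPow t w‖ = ‖w‖ ^ t := by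
  rcases eq_or_ne w 0 with rfl | hw
  · simp [Real.zero_rpow ht]
  · have hpos : 0 < ‖w‖ := norm_pos_iff.2 hw
    rw [radialPow, norm_mul, Complex.norm_of_nonneg (by positivity), Real.rpow_sub_one hpos.ne',
      div_mul_cancel₀ _ hpos.ne']

lemma continuous_radialPow {t : ℝ} (ht : 0 < t) : Continuous (radialPow t) := by
  refine continuous_iff_continuousAt.2 fun w => ?_
  rcases eq_or_ne w 0 with rfl | hw
  · rw [ContinuousAt, radialPow_zero, tendsto_zero_iff_norm_tendsto_zero]
    simp_rw [norm_radialPow ht.ne']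
    have hcont := continuous_norm (E := ℂ) |>.rpow_const (p := t) fun _ => .inr ht.le
    simpa [Real.zero_rpow ht.ne'] using hcont.tendsto 0
  · exact (Complex.continuous_ofReal.continuousAt.comp <|
      continuous_norm.continuousAt.rpow_const <| .inl <| norm_ne_zero_iff.2 hw).mul continuousAt_id

lemma radialPow_exp_mul (t a : ℝ) (w : ℂ) :
    radialPow t (Real.exp a * w) = Real.exp (t * a) * radialPow t w := by
  have hexp : Real.exp (t * a) = Real.exp (a * (t - 1)) * Real.exp a := by
    rw [← Real.exp_add]; ring_nf
  rw [radialPow, radialPow, norm_mul, Complex.norm_of_nonneg (Real.exp_pos a).le,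
    Real.mul_rpow (Real.exp_pos a).le (norm_nonneg w), ← Real.exp_mul, hexp]
  push_cast
  ring

lemma radialPow_radialPow_inv {t : ℝ} (ht : t ≠ 0) (w : ℂ) : radialPow t (radialPow t⁻¹ w) = w := by
  rcases eq_or_ne w 0 with rfl | hw
  · simp
  · have hpos : 0 < ‖w‖ := norm_pos_iff.2 hw
    rw [radialPow, norm_radialPow (inv_ne_zero ht), radialPow, ← mul_assoc, ← Complex.ofReal_mul,
      ← Real.rpow_mul hpos.le, ← Real.rpow_add hpos,
      show t⁻¹ * (t - 1) + (t⁻¹ - 1) = 0 by field_simp; ring, Real.rpow_zero, Complex.ofReal_one,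
      one_mul]

/-- The map induced by `radialPow t` on `c₀(ℕ)`. -/
def c0RadialPow {t : ℝ} (ht : 0 < t) : c0C → c0C :=
  c0Comp (radialPow t) (by simpa using (continuous_radialPow ht).tendsto 0)

lemma continuous_c0RadialPow {t : ℝ} (ht : 0 < t) : Continuous (c0RadialPow ht) :=
  continuous_c0Comp _ (continuous_radialPow ht)

lemma surjective_c0RadialPow {t : ℝ} (ht : 0 < t) : Surjective (c0RadialPow ht) :=
  fun x => ⟨c0RadialPow (inv_pos.2 ht) x,
    ZeroAtInftyContinuousMap.ext fun n => radialPow_radialPow_inv ht.ne' (x n)⟩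

end Composition

section ExpShift

variable {ι : Type*} (c : ℕ →ᵇ ℝ)

/-- The weighted backward shift on `c₀(ℕ)` with weights `exp (a * c n)`, `n ≥ 1`. -/
def expShift (a : ℝ) (x : c0C) : c0C :=
  c0OfTendsto (fun n => Real.exp (a * c (n + 1)) * x (n + 1)) <| by
    have hbound (n : ℕ) : ‖(Real.exp (a * c (n + 1)) : ℂ)‖ ≤ Real.exp (|a| * ‖c‖) := by
      rw [Complex.norm_of_nonneg (Real.exp_pos _).le, Real.exp_le_exp]
      exact (le_abs_self _).trans <| (abs_mul a _).trans_le <| by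
        gcongr
        exact c.norm_coe_le_norm (n + 1)
    exact isBoundedUnder_le_mul_tendsto_zero (isBoundedUnder_of ⟨_, hbound⟩)
      ((tendsto_c0_atTop x).comp (tendsto_add_atTop_nat 1))

@[simp]
lemma expShift_apply (a : ℝ) (x : c0C) (n : ℕ) :
    expShift c a x n = Real.exp (a * c (n + 1)) * x (n + 1) := rfl

lemma expShift_iterate_apply (a : ℝ) (N : ℕ) (x : c0C) (n : ℕ) :
    (expShift c a)^[N] x n = Real.exp (a * ∑ k ∈ range N, c (n + k + 1)) * x (n + N) := by
  induction N generalizing x with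
  | zero => simp
  | succ N ih =>
    rw [iterate_succ_apply, ih, expShift_apply, ← mul_assoc, ← Complex.ofReal_mul,
      ← Real.exp_add, ← mul_add, ← sum_range_succ (fun k => c (n + k + 1)), add_assoc n N 1]

lemma tendsto_iterate_expShift_zero (x : c0C) :
    Tendsto (fun N => (expShift c 0)^[N] x) atTop (𝓝 0) := by
  refine ZeroAtInftyContinuousMap.tendsto_iff_tendstoUniformly.2 <|
    Metric.tendstoUniformly_iff.2 fun ε hε => ?_
  obtain ⟨M, hM⟩ := exists_forall_ge_norm_c0_apply_lt x hε
  filter_upwards [eventually_ge_atTop M] with N hN n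
  simpa [expShift_iterate_apply] using hM (n + N) (by omega)

lemma continuous_uncurry_expShift : Continuous (uncurry (expShift c)) :=
  continuous_c0_of_forall_apply_eq
    (g := fun q : ℝ × ℝ × ℂ => (Real.exp (q.1 * q.2.1) : ℂ) * q.2.2) (by fun_prop)
    (isCompact_closedBall (0 : ℝ) ‖c‖) (s := fun n => c (n + 1))
    (fun n => mem_closedBall_zero_iff.2 (c.norm_coe_le_norm (n + 1))) Nat.succ fun _ _ _ => rfl

/-- The product operator `∏ i, expShift c (lam i)`. -/
def prodExpShift (lam : ι → ℝ) : (ι → c0C) → ι → c0C :=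
  Pi.map fun i => expShift c (lam i)

lemma prodExpShift_iterate_apply (lam : ι → ℝ) (N : ℕ) (x : ι → c0C) (i : ι) :
    (prodExpShift c lam)^[N] x i = (expShift c (lam i))^[N] (x i) := by
  rw [prodExpShift, Pi.map_iterate, Pi.map_apply]

lemma tendsto_iterate_prodExpShift_zero (x : ι → c0C) :
    Tendsto (fun N => (prodExpShift c (0 : ι → ℝ))^[N] x) atTop (𝓝 0) := by
  refine tendsto_pi_nhds.2 fun i => ?_
  simpa only [prodExpShift_iterate_apply] using! tendsto_iterate_expShift_zero c (x i)

lemma continuous_uncurry_prodExpShift :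
    Continuous (uncurry (prodExpShift c : (ι → ℝ) → (ι → c0C) → ι → c0C)) :=
  continuous_pi fun i => (continuous_uncurry_expShift c).comp
    (f := fun q : (ι → ℝ) × (ι → c0C) => (q.1 i, q.2 i)) (by fun_prop)

lemma semiconj_c0RadialPow {t : ℝ} (ht : 0 < t) (lam : ι → ℝ) :
    Semiconj (Pi.map fun _ => c0RadialPow ht) (prodExpShift c lam) (prodExpShift c (t • lam)) :=
  fun x => funext fun i => ZeroAtInftyContinuousMap.ext fun n =>
    (radialPow_exp_mul t (lam i * c (n + 1)) (x i (n + 1))).trans <| by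
      rw [← mul_assoc]
      rfl

variable {c}

lemma IsHypercyclicPoint.piMap_c0RadialPow {lam : ι → ℝ} {x : ι → c0C}
    (h : IsHypercyclicPoint (prodExpShift c lam) x) {t : ℝ} (ht : 0 < t) :
    IsHypercyclicPoint (prodExpShift c (t • lam)) (Pi.map (fun _ => c0RadialPow ht) x) :=
  h.map_of_semiconj (semiconj_c0RadialPow c ht lam)
    (continuous_pi fun i => (continuous_c0RadialPow ht).comp (continuous_apply i))
    (.piMap fun _ => surjective_c0RadialPow ht)

section Finite

variable [Finite ι]

lemma IsHypercyclicPoint.add_of_mem_span_c0Single {lam : ι → ℝ} {x u : ι → c0C}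
    (h : IsHypercyclicPoint (prodExpShift c lam) x)
    (hu : ∀ i, u i ∈ Submodule.span ℂ (Set.range c0Single)) :
    IsHypercyclicPoint (prodExpShift c lam) (x + u) := by
  have hzero : ∀ᶠ N in atTop, ∀ n, N ≤ n → ∀ i, u i n = 0 :=
    eventually_forall_ge_atTop.2 <|
      eventually_all.2 fun i => eventually_apply_eq_zero_of_mem_span_c0Single (hu i)
  refine h.congr <| hzero.mono fun N hN => funext fun i => ZeroAtInftyContinuousMap.ext fun n => ?_
  simp [prodExpShift_iterate_apply, expShift_iterate_apply, hN (n + N) (Nat.le_add_left N n) i]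

lemma dense_setOf_forall_isHypercyclicPoint {Λ : Set (ι → ℝ)} {x : ι → c0C}
    (hx : ∀ lam ∈ Λ, IsHypercyclicPoint (prodExpShift c lam) x) :
    Dense {y | ∀ lam ∈ Λ, IsHypercyclicPoint (prodExpShift c lam) y} := by
  have hspan : Dense (Set.pi Set.univ fun _ : ι =>
      (Submodule.span ℂ (Set.range c0Single) : Set c0C)) :=
    dense_pi _ fun _ _ => dense_span_c0Single
  refine ((AddGroup.addLeft_bijective x).surjective.denseRange.dense_image
    (continuous_const_add x) hspan).mono ?_
  rintro _ ⟨u, hu, rfl⟩ lam hlam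
  exact (hx lam hlam).add_of_mem_span_c0Single fun i => hu i trivial

lemma dense_setOf_forall_isHypercyclicPoint_smul {Λ : Set (ι → ℝ)} (hΛ : IsSigmaCompact Λ)
    {x : ι → c0C} (hx : ∀ lam ∈ Λ, IsHypercyclicPoint (prodExpShift c lam) x) {t : ℕ → ℝ}
    (ht : ∀ m, 0 < t m) :
    Dense {y | ∀ m, ∀ lam ∈ Λ, IsHypercyclicPoint (prodExpShift c (t m • lam)) y} := by
  cases nonempty_fintype ι
  rw [Set.ofPred_forall]
  refine dense_iInter_of_Gδ (fun m => ?_) fun m => ?_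
  · exact isGδ_setOf_forall_isHypercyclicPoint (f := fun lam => prodExpShift c (t m • lam))
      ((continuous_uncurry_prodExpShift c).comp
        (f := fun q : (ι → ℝ) × (ι → c0C) => (t m • q.1, q.2)) (by fun_prop)) hΛ
  · have himage := dense_setOf_forall_isHypercyclicPoint (Λ := (t m • ·) '' Λ)
      (Set.forall_mem_image.2 fun lam hlam => (hx lam hlam).piMap_c0RadialPow (ht m))
    simpa only [Set.forall_mem_image] using himage

end Finite

end ExpShift

section Algebra

variable {ι : Type*} {c : ℕ →ᵇ ℝ}

lemma exists_eq_X_pow_mul_C_add {Q : Polynomial ℂ} (hQ : Q ≠ 0) :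
    ∃ (m : ℕ) (b : ℂ) (q : Polynomial ℂ), b ≠ 0 ∧ Q = .X ^ m * (.C b + .X * q) := by
  obtain ⟨R, hR, hndvd⟩ := Q.exists_eq_pow_rootMultiplicity_mul_and_not_dvd hQ 0
  rw [Polynomial.C_0, sub_zero] at hR hndvd
  refine ⟨Q.rootMultiplicity 0, R.coeff 0, R.divX, mt Polynomial.X_dvd_iff.2 hndvd, ?_⟩
  rw [add_comm, R.X_mul_divX_add]
  exact hR

/-- The map `(y, r) ↦ y ^ (m + 1) (b + r q(r))`, through which the iterates of a shift act on a
polynomial with lowest order term `b X ^ (m + 1)`. -/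
def leadingEval (m : ℕ) (b : ℂ) (q : Polynomial ℂ) (v : (ι → c0C) × (ι → c0C)) : ι → c0C :=
  fun i => b • c0XMulEval (.X ^ m) (v.1 i) + c0XMulEval (.X ^ m) (v.1 i) * c0XMulEval q (v.2 i)

lemma leadingEval_apply (m : ℕ) (b : ℂ) (q : Polynomial ℂ) (v : (ι → c0C) × (ι → c0C)) (i : ι)
    (n : ℕ) : leadingEval m b q v i n = v.1 i n ^ (m + 1) * (b + v.2 i n * q.eval (v.2 i n)) := by
  simp only [leadingEval, ZeroAtInftyContinuousMap.add_apply, ZeroAtInftyContinuousMap.smul_apply,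
    ZeroAtInftyContinuousMap.mul_apply, c0XMulEval_apply, Polynomial.eval_pow, Polynomial.eval_X,
    smul_eq_mul]
  ring

lemma leadingEval_diag (m : ℕ) (b : ℂ) (q : Polynomial ℂ) (y : ι → c0C) :
    leadingEval m b q (y, y) = fun i => c0XMulEval (.X ^ m * (.C b + .X * q)) (y i) := by
  ext i n
  simp [leadingEval_apply, pow_succ', mul_assoc]

lemma continuous_leadingEval (m : ℕ) (b : ℂ) (q : Polynomial ℂ) :
    Continuous (leadingEval (ι := ι) m b q) := by
  have hpow := continuous_c0XMulEval (.X ^ m)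
  have hq := continuous_c0XMulEval q
  unfold leadingEval
  fun_prop

lemma semiconj_leadingEval (c : ℕ →ᵇ ℝ) (m : ℕ) (b : ℂ) (q : Polynomial ℂ) (lam : ι → ℝ) :
    Semiconj (leadingEval m b q)
      (Prod.map (prodExpShift c (((m : ℝ) + 1)⁻¹ • lam)) (prodExpShift c 0))
      (prodExpShift c lam) := by
  intro v
  ext i n
  have hexp : Real.exp (((m : ℝ) + 1)⁻¹ * lam i * c (n + 1)) ^ (m + 1) =
      Real.exp (lam i * c (n + 1)) := by
    rw [← Real.exp_nat_mul]
    push_cast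
    field_simp
  simp [leadingEval_apply, prodExpShift, mul_pow, ← hexp, mul_assoc]

lemma exists_leadingEval_zero_eq (m : ℕ) {b : ℂ} (hb : b ≠ 0) (q : Polynomial ℂ) (z : ι → c0C) :
    ∃ y, leadingEval m b q (y, 0) = z := by
  choose y hy using fun i => surjective_c0XMulEval_X_pow m (b⁻¹ • z i)
  refine ⟨y, funext fun i => ZeroAtInftyContinuousMap.ext fun n => ?_⟩
  have hyn : y i n ^ (m + 1) = b⁻¹ * z i n := by
    simpa [pow_succ'] using DFunLike.congr_fun (hy i) n
  simp [leadingEval_apply, hyn, mul_right_comm, inv_mul_cancel₀ hb]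

lemma isHypercyclicPoint_c0XMulEval {lam : ι → ℝ} {y : ι → c0C}
    (h : ∀ m : ℕ, IsHypercyclicPoint (prodExpShift c (((m : ℝ) + 1)⁻¹ • lam)) y)
    {Q : Polynomial ℂ} (hQ : Q ≠ 0) :
    IsHypercyclicPoint (prodExpShift c lam) fun i => c0XMulEval Q (y i) := by
  obtain ⟨m, b, q, hb, rfl⟩ := exists_eq_X_pow_mul_C_add hQ
  rw [← leadingEval_diag]
  exact (h m).map_of_semiconj_prodMap (tendsto_iterate_prodExpShift_zero c y)
    (continuous_leadingEval m b q) (semiconj_leadingEval c m b q lam)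
    (exists_leadingEval_zero_eq m hb q)

end Algebra

lemma IsProductShiftC0.coe_eq_prodExpShift {d : ℕ} {c : ℕ →ᵇ ℝ} {lam : Fin d → ℝ}
    {T : (Fin d → c0C) →L[ℂ] (Fin d → c0C)}
    (hT : IsProductShiftC0 d (fun a n => Real.exp (a * c n)) T lam) :
    ⇑T = prodExpShift c lam :=
  funext fun v => funext fun i => ZeroAtInftyContinuousMap.ext fun n => hT v i n

lemma IsProductShiftC0.dense_range_pow_iff {d : ℕ} [NeZero d] {c : ℕ →ᵇ ℝ} {lam : Fin d → ℝ}
    {T : (Fin d → c0C) →L[ℂ] (Fin d → c0C)}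
    (hT : IsProductShiftC0 d (fun a n => Real.exp (a * c n)) T lam) {x : Fin d → c0C} :
    Dense (Set.range fun n : ℕ => (T ^ (n + 1)) x) ↔
      IsHypercyclicPoint (prodExpShift c lam) x := by
  have hpunctured (y : Fin d → c0C) : NeBot (𝓝[≠] y) := Module.punctured_nhds_neBot ℂ _ y
  simp only [FunLike.coe_pow_eq_iterate, hT.coe_eq_prodExpShift]
  exact dense_range_iterate_succ_iff

lemma commonHypercyclicAlgebraCWC0_of_c0XMulEval {d : ℕ} {S : Set (Fin d → ℝ)}
    {T : (Fin d → ℝ) → ((Fin d → c0C) →L[ℂ] (Fin d → c0C))} {y : Fin d → c0C} (hy : y ≠ 0)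
    (hT : ∀ Q : Polynomial ℂ, Q ≠ 0 → ∀ lam ∈ S,
      Dense (Set.range fun n : ℕ => ((T lam) ^ (n + 1)) fun i => c0XMulEval Q (y i))) :
    CommonHypercyclicAlgebraCWC0 d S T := by
  refine ⟨Set.range fun Q i => c0XMulEval Q (y i), ⟨0, ?_⟩, ?_, ?_, ?_, ⟨y, ⟨1, ?_⟩, hy⟩, ?_⟩
  · ext i n
    simp
  · rintro _ ⟨P, rfl⟩ _ ⟨Q, rfl⟩
    refine ⟨P + Q, ?_⟩
    ext i n
    simp [mul_add]
  · rintro a _ ⟨P, rfl⟩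
    refine ⟨.C a * P, ?_⟩
    ext i n
    simp [mul_left_comm]
  · rintro _ ⟨P, rfl⟩ _ ⟨Q, rfl⟩
    refine ⟨_, ⟨P * .X * Q, rfl⟩, fun i n => ?_⟩
    simp only [c0XMulEval_apply, Polynomial.eval_mul, Polynomial.eval_X]
    ring
  · ext i n
    simp
  · rintro _ ⟨Q, rfl⟩ hne
    refine hT Q ?_
    rintro rfl
    refine hne ?_
    ext i n
    simp

theorem stmt_10_general (d : ℕ) (hd : 1 ≤ d) (c : ℕ →ᵇ ℝ) (Λ : Set (Fin d → ℝ))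
    (hΛσ : IsSigmaCompact Λ) (T : (Fin d → ℝ) → ((Fin d → c0C) →L[ℂ] (Fin d → c0C)))
    (hT : ∀ lam ∈ Λ, IsProductShiftC0 d (fun a n => Real.exp (a * c n)) (T lam) lam) :
    (∃ x : Fin d → c0C, ∀ lam ∈ Λ,
        Dense (Set.range fun n : ℕ => ((T lam) ^ (n + 1)) x)) ↔
      CommonHypercyclicAlgebraCWC0 d Λ T := by
  have : NeZero d := ⟨by omega⟩
  refine ⟨fun ⟨x, hx⟩ => ?_, fun ⟨_, _, _, _, _, ⟨x, hxA, hx0⟩, hA⟩ => ⟨x, hA x hxA hx0⟩⟩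
  have hdense := dense_setOf_forall_isHypercyclicPoint_smul hΛσ
    (fun lam hlam => (hT lam hlam).dense_range_pow_iff.1 (hx lam hlam))
    (t := fun m => ((m : ℝ) + 1)⁻¹) fun m => by positivity
  obtain ⟨y, hy, hy0⟩ := hdense.exists_mem_open isOpen_compl_singleton (exists_ne 0)
  exact commonHypercyclicAlgebraCWC0_of_c0XMulEval hy0 fun Q hQ lam hlam =>
    (hT lam hlam).dense_range_pow_iff.2 <|
    isHypercyclicPoint_c0XMulEval (fun m => hy m lam hlam) hQ

lemma abs_rpow_sub_rpow_pred_le_one {α : ℝ} (hα0 : 0 < α) (hα1 : α ≤ 1) (n : ℕ) :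
    |(n : ℝ) ^ α - ((n : ℝ) - 1) ^ α| ≤ 1 := by
  rcases n with _ | n
  · -- here `(-1) ^ α` is the real number `cos (π * α)`
    simpa [Real.zero_rpow hα0.ne'] using Real.abs_rpow_le_abs_rpow (-1) α
  · have hmono : (n : ℝ) ^ α ≤ ((n : ℝ) + 1) ^ α := by gcongr; simp
    have hsub := Real.rpow_add_le_add_rpow n.cast_nonneg zero_le_one hα0.le hα1
    rw [Real.one_rpow] at hsub
    rw [Nat.cast_succ, add_sub_cancel_right, abs_of_nonneg (by linarith)]
    linarith

/-- Proposition 1.3 / Proposition 2.10 of the paper, case `X = c₀(ℕ)`. -/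
theorem stmt_10 (d : ℕ) (hd : 1 ≤ d) (α : ℝ) (hα0 : 0 < α) (hα1 : α ≤ 1)
    (Λ : Set (Fin d → ℝ)) (hΛpos : ∀ lam ∈ Λ, ∀ i, 0 < lam i) (hΛσ : IsSigmaCompact Λ)
    (T : (Fin d → ℝ) → ((Fin d → c0C) →L[ℂ] (Fin d → c0C)))
    (hT : ∀ lam ∈ Λ, IsProductShiftC0 d (wExp α) (T lam) lam) :
    (∃ x : Fin d → c0C, ∀ lam ∈ Λ,
        Dense (Set.range fun n : ℕ => ((T lam) ^ (n + 1)) x)) ↔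
      CommonHypercyclicAlgebraCWC0 d Λ T :=
  stmt_10_general d hd (.ofNormedAddCommGroupDiscrete _ 1
    (abs_rpow_sub_rpow_pred_le_one hα0 hα1)) Λ hΛσ T hT
end
end

section
/- Let d ≥ 1 be an integer, p ∈ [1,∞), α ∈ (0, 1/d), and for λ > 0 let w(λ) be the positive weight sequence determined by w_1(λ)⋯w_n(λ) = exp(λ·n^α) for all n ≥ 1. Then the family (B_{w(λ₁)} × ⋯ × B_{w(λ_d)})_{λ∈(0,∞)^d} admits a common hypercyclic algebra on ℓp(ℕ)^d for the coordinatewise product. -/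
open scoped ENNReal
open Finset

noncomputable section

/-!
The algebra consists of the vectors `P(u)`, with `P` a polynomial without constant term and `u`
a single vector. Since `u` tends to `0`, the term of lowest order `c * u ^ m` decides the
behaviour of `P(u)` under iterates of high order, so it suffices that all powers of `u` be
universal for all parameters.

Such a `u` is glued from finite blocks, each of which realizes one approximation for all
parameters of a small box; a block is chosen so small that it does not disturb the earlier ones.
To build a block for the target `v` and the power `m`, one writes `m`-th roots of preimages of
`v` into cells of length `R`, the cell at time `t` being devoted to a parameter `μ t`. Evaluated
at a parameter `l` close to `μ t₀`, the cell at time `t` contributes at coordinate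
`k ≈ R * (t - t₀)` a factor of size `exp ((l - μ t) * (R * t) ^ α - l * k ^ α)`, which is
negligible provided that `μ` is `α`-Hölder with a small constant in the rescaled time `t / N`,
where `t` ranges over `[N, 2 * N)`. At the same time the values of `μ` have to be dense up to a
small multiple of `N ^ (-α)`. A self-similar path through the subcubes of the `d`-dimensional
cube has both properties: it is covered by about `N` balls of radius `N ^ (-α)`, which leaves
room to spare because `α * d < 1`.
-/

open Filter Topology

section WeightProducts

/-- The product `w (k + 1) ⋯ w (k + n)`: the `n`-th iterate of the weighted backward shift `B_w`
maps `x` to `k ↦ weightProd w n k * x (n + k)`. -/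
def weightProd (w : ℕ → ℝ) (n k : ℕ) : ℝ := ∏ j ∈ range n, w (k + j + 1)

theorem weightProd_succ (w : ℕ → ℝ) (n k : ℕ) :
    weightProd w (n + 1) k = weightProd w n k * w (n + k + 1) := by
  rw [weightProd, prod_range_succ, weightProd, add_comm k n]

theorem abs_weightProd_le {w : ℕ → ℝ} {b : ℝ} (hw : ∀ j, |w (j + 1)| ≤ b) (n k : ℕ) :
    |weightProd w n k| ≤ b ^ n := by
  rw [weightProd, abs_prod]
  simpa using prod_le_prod (s := range n) (fun _ _ => abs_nonneg _) fun j _ => hw (k + j)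

theorem IsProductShift.pow_apply {p : ℝ≥0∞} [Fact (1 ≤ p)] {d : ℕ} {w : ℝ → ℕ → ℝ}
    {T : (Fin d → lpC p) →L[ℂ] (Fin d → lpC p)} {lam : Fin d → ℝ}
    (hT : IsProductShift p d w T lam) (n : ℕ) (x : Fin d → lpC p) (i : Fin d) (k : ℕ) :
    (T ^ n) x i k = weightProd (w (lam i)) n k * x i (n + k) := by
  induction n generalizing x with
  | zero => simp [weightProd]
  | succ n ih =>
    rw [pow_succ, mul_apply_eq_comp, ih, hT x i (n + k), weightProd_succ,
      Nat.add_right_comm n 1 k, Complex.ofReal_mul, mul_assoc]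

theorem weightProd_wExp (α a : ℝ) (n k : ℕ) :
    weightProd (wExp α a) n k = Real.exp (a * (((n + k : ℕ) : ℝ) ^ α - (k : ℝ) ^ α)) := by
  induction n with
  | zero => simp [weightProd]
  | succ n ih =>
    rw [weightProd_succ, ih, wExp, ← Real.exp_add, Nat.add_right_comm n 1 k, Nat.cast_succ,
      add_sub_cancel_right]
    ring_nf

theorem abs_wExp_le {α a A : ℝ} (hα0 : 0 ≤ α) (hα1 : α ≤ 1) (ha : a ∈ Set.Icc 0 A) (j : ℕ) :
    |wExp α a (j + 1)| ≤ Real.exp A := by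
  have h_incr : ((j : ℝ) + 1) ^ α - (j : ℝ) ^ α ≤ 1 := by
    have := Real.rpow_add_le_add_rpow (Nat.cast_nonneg j) zero_le_one hα0 hα1
    rw [Real.one_rpow] at this
    linarith
  rw [wExp, Real.abs_exp, Real.exp_le_exp, Nat.cast_succ, add_sub_cancel_right]
  calc a * (((j : ℝ) + 1) ^ α - (j : ℝ) ^ α) ≤ a * 1 := by gcongr; exact ha.1
    _ ≤ A := by simpa using ha.2

end WeightProducts

section Majorant

/-- The summable sequence `1 / (k + 1) ^ 2`. Sequences are compared pointwise, relative to this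
majorant, which controls all `ℓᵖ` norms at once and avoids manipulating series. -/
def majorant (k : ℕ) : ℝ := 1 / ((k : ℝ) + 1) ^ 2

theorem majorant_pos (k : ℕ) : 0 < majorant k := by
  unfold majorant
  positivity

theorem majorant_antitone : Antitone majorant := fun j k hjk => by
  unfold majorant
  gcongr

theorem majorant_le_one (k : ℕ) : majorant k ≤ 1 := by
  simpa [majorant] using majorant_antitone (Nat.zero_le k)

theorem summable_majorant : Summable majorant := by
  unfold majorant
  have h := (summable_nat_add_iff 1).2 (Real.summable_one_div_nat_pow.2 one_lt_two)
  exact_mod_cast h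

theorem tendsto_majorant : Tendsto majorant atTop (𝓝 0) :=
  summable_majorant.tendsto_atTop_zero

theorem memℓp_of_norm_le_majorant {p : ℝ≥0∞} [hp : Fact (1 ≤ p)] {x : ℕ → ℂ} {C : ℝ}
    (hx : ∀ k, ‖x k‖ ≤ C * majorant k) : Memℓp x p := by
  have hx1 : Memℓp x 1 := memℓp_gen <| by
    simpa using Summable.of_nonneg_of_le (fun _ => norm_nonneg _) hx (summable_majorant.mul_left C)
  exact hx1.of_exponent_ge hp.out

theorem exists_norm_le_of_norm_le_majorant (p : ℝ≥0∞) [hp : Fact (1 ≤ p)] :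
    ∃ C > 0, ∀ θ ≥ 0, ∀ x : lpC p, (∀ k, ‖x k‖ ≤ θ * majorant k) → ‖x‖ ≤ θ * C := by
  have hp0 : p ≠ 0 := (zero_lt_one.trans_le hp.out).ne'
  let ω : lpC p := ⟨fun k => (majorant k : ℂ), memℓp_of_norm_le_majorant (C := 1) fun k => by
    simp [abs_of_pos (majorant_pos k)]⟩
  have hω : ∀ k, ω k = majorant k := fun _ => rfl
  refine ⟨‖ω‖ + 1, by positivity, fun θ hθ x hx => ?_⟩
  calc ‖x‖ ≤ ‖(θ : ℂ) • ω‖ := lp.norm_mono hp0 fun k => by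
        rw [lp.coeFn_smul, Pi.smul_apply, hω, smul_eq_mul, norm_mul, Complex.norm_real,
          Complex.norm_real, Real.norm_of_nonneg hθ, Real.norm_of_nonneg (majorant_pos k).le]
        exact hx k
    _ = θ * ‖ω‖ := by rw [lp.norm_const_smul hp0, Complex.norm_real, Real.norm_of_nonneg hθ]
    _ ≤ θ * (‖ω‖ + 1) := by gcongr; linarith

theorem exists_norm_mul_le_of_finsupp (v : ℕ →₀ ℂ) (f : ℕ → ℝ) :
    ∃ W > 0, ∀ k, ‖v k‖ * f k ≤ W := by
  obtain ⟨W, hW⟩ := (v.support.image fun k => ‖v k‖ * f k).exists_le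
  refine ⟨max W 1, by positivity, fun k => ?_⟩
  by_cases hk : v k = 0
  · simp [hk]
  · exact (hW _ (mem_image_of_mem _ (Finsupp.mem_support_iff.2 hk))).trans (le_max_left _ _)

theorem exists_norm_le_majorant_of_finsupp (v : ℕ →₀ ℂ) :
    ∃ V > 0, ∀ k, ‖v k‖ ≤ V * majorant k := by
  obtain ⟨V, hV0, hV⟩ := exists_norm_mul_le_of_finsupp v fun k => (majorant k)⁻¹
  exact ⟨V, hV0, fun k => by simpa [← div_eq_mul_inv, div_le_iff₀ (majorant_pos k)] using hV k⟩

theorem exists_finsupp_norm_sub_lt {p : ℝ≥0∞} [Fact (1 ≤ p)] (hp : p ≠ ⊤) {d : ℕ}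
    (y : Fin d → lpC p) {ε : ℝ} (hε : 0 < ε) :
    ∃ (v : Fin d → ℕ →₀ ℂ) (y' : Fin d → lpC p), (∀ i k, y' i k = v i k) ∧
      ∀ i, ‖y' i - y i‖ < ε := by
  have h_near : ∀ᶠ s : Finset ℕ in atTop, ∀ i, ‖∑ k ∈ s, lp.single p k (y i k) - y i‖ < ε :=
    eventually_all.2 fun i => by
      simpa [dist_eq_norm] using Metric.tendsto_nhds.1 (lp.hasSum_single hp (y i)) ε hε
  obtain ⟨s, hs⟩ := h_near.exists
  refine ⟨fun i => ∑ k ∈ s, Finsupp.single k (y i k), _, fun i k => ?_, hs⟩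
  rw [lp.coeFn_sum, Finset.sum_apply, Finsupp.finsetSum_apply]
  exact sum_congr rfl fun j _ => by
    rw [lp.single_apply, Pi.single_apply, Finsupp.single_apply]
    simp only [eq_comm]

end Majorant

section Criterion

variable {d : ℕ} {w : ℝ → ℕ → ℝ} {S : Set (Fin d → ℝ)} {lam : Fin d → ℝ} {u : Fin d → ℕ → ℂ}

/-- The `n`-th iterate of the product of the shifts `B_{w (lam i)}` maps `x` to within
`ε * majorant` of `v`, in every coordinate. -/
def Approximates (w : ℝ → ℕ → ℝ) (lam : Fin d → ℝ) (x : Fin d → ℕ → ℂ) (v : Fin d → ℕ →₀ ℂ)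
    (ε : ℝ) (n : ℕ) : Prop :=
  ∀ i k, ‖(weightProd (w (lam i)) n k : ℂ) * x i (n + k) - v i k‖ ≤ ε * majorant k

/-- Every positive coordinatewise power of `u` is hypercyclic for each product shift with parameter
in `S`, approximation being understood relative to `majorant`. -/
def IsPowerUniversal (w : ℝ → ℕ → ℝ) (S : Set (Fin d → ℝ)) (u : Fin d → ℕ → ℂ) : Prop :=
  ∀ lam ∈ S, ∀ m ≠ 0, ∀ v, ∀ ε > 0, ∃ᶠ n in atTop, Approximates w lam (u ^ m) v ε n

theorem exists_eq_X_pow_mul_eval_zero_ne_zero {P : Polynomial ℂ} (hP : P ≠ 0)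
    (hP0 : P.coeff 0 = 0) : ∃ m ≠ 0, ∃ G : Polynomial ℂ, P = .X ^ m * G ∧ G.eval 0 ≠ 0 := by
  obtain ⟨G, hPG, hG⟩ := P.exists_eq_pow_rootMultiplicity_mul_and_not_dvd hP 0
  have h_root : P.IsRoot 0 := by rw [Polynomial.IsRoot, ← Polynomial.coeff_zero_eq_eval_zero, hP0]
  refine ⟨P.rootMultiplicity 0, ((Polynomial.rootMultiplicity_pos hP).2 h_root).ne', G,
    by simpa using hPG, ?_⟩
  rwa [Polynomial.dvd_iff_isRoot] at hG

theorem Approximates.mul {x g : Fin d → ℕ → ℂ} {z : Fin d → ℕ →₀ ℂ} {V : Fin d → ℝ} {c : ℂ}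
    {ε : ℝ} {n : ℕ} (hc : c ≠ 0) (hV : ∀ i, 0 < V i) (hz : ∀ i k, ‖z i k‖ ≤ V i * majorant k)
    (hx : Approximates w lam x z (ε / (4 * ‖c‖)) n)
    (hg : ∀ i k, ‖g i (n + k) - c‖ ≤ min ‖c‖ (ε / (2 * V i))) :
    Approximates w lam (x * g) (c • z) ε n := by
  intro i k
  have hg_norm : ‖g i (n + k)‖ ≤ 2 * ‖c‖ := by
    linarith [norm_sub_norm_le (g i (n + k)) c, (hg i k).trans (min_le_left _ _)]
  have hg_sub : ‖g i (n + k) - c‖ ≤ ε / (2 * V i) := (hg i k).trans (min_le_right _ _)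
  have hVi := hV i
  have hω := majorant_pos k
  set W : ℂ := (weightProd (w (lam i)) n k : ℂ)
  calc ‖W * (x * g) i (n + k) - (c • z) i k‖
      = ‖(W * x i (n + k) - z i k) * g i (n + k) + z i k * (g i (n + k) - c)‖ := by
        congr 1
        simp only [Pi.mul_apply, Pi.smul_apply, Finsupp.smul_apply, smul_eq_mul]
        ring
    _ ≤ ε / (4 * ‖c‖) * majorant k * (2 * ‖c‖) + V i * majorant k * (ε / (2 * V i)) := by
        refine (norm_add_le _ _).trans ?_
        rw [norm_mul, norm_mul]
        have h_approx := hx i k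
        exact add_le_add (mul_le_mul h_approx hg_norm (norm_nonneg _)
          ((norm_nonneg _).trans h_approx)) (by gcongr; exact hz i k)
    _ = ε * majorant k := by
        field_simp
        ring

/-- In a polynomial of the small sequence `u`, only the lowest order term `c * u ^ m` matters. -/
theorem IsPowerUniversal.frequently_approximates_eval (hu : IsPowerUniversal w S u)
    (hu0 : ∀ i, Tendsto (u i) atTop (𝓝 0)) (hlam : lam ∈ S) {P : Polynomial ℂ} (hP : P ≠ 0)
    (hP0 : P.coeff 0 = 0) (v : Fin d → ℕ →₀ ℂ) {ε : ℝ} (hε : 0 < ε) :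
    ∃ᶠ n in atTop, Approximates w lam (fun i q => P.eval (u i q)) v ε n := by
  obtain ⟨m, hm, G, rfl, hG⟩ := exists_eq_X_pow_mul_eval_zero_ne_zero hP hP0
  set c := G.eval 0
  have hc : 0 < ‖c‖ := norm_pos_iff.2 hG
  choose V hV0 hV using fun i => exists_norm_le_majorant_of_finsupp (c⁻¹ • v i)
  have h_near : ∀ᶠ n in atTop, ∀ q ≥ n, ∀ i,
      ‖G.eval (u i q) - c‖ ≤ min ‖c‖ (ε / (2 * V i)) := by
    refine eventually_forall_ge_atTop.2 (eventually_all.2 fun i => ?_)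
    have h_lim : Tendsto (fun q => G.eval (u i q)) atTop (𝓝 c) :=
      (G.continuous.tendsto 0).comp (hu0 i)
    have := hV0 i
    simpa only [dist_eq_norm] using
      (Metric.tendsto_nhds.1 h_lim _ (lt_min hc (by positivity))).mono fun _ => le_of_lt
  refine ((hu lam hlam m hm (c⁻¹ • v) (ε / (4 * ‖c‖)) (by positivity)).and_eventually
    h_near).mono fun n ⟨h_approx, hn⟩ => ?_
  have h_mul := Approximates.mul (z := c⁻¹ • v) (g := fun i q => G.eval (u i q)) hG hV0 hV h_approx
    fun i k => hn (n + k) (Nat.le_add_right n k) i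
  rw [smul_inv_smul₀ hG] at h_mul
  convert h_mul using 1
  ext i q
  simp

theorem dense_range_pow_of_frequently_approximates {p : ℝ≥0∞} [Fact (1 ≤ p)] (hp : p ≠ ⊤)
    {T : (Fin d → lpC p) →L[ℂ] (Fin d → lpC p)} (hT : IsProductShift p d w T lam)
    {x : Fin d → lpC p}
    (hx : ∀ v, ∀ ε > 0, ∃ᶠ n in atTop, Approximates w lam (fun i => x i) v ε n) :
    Dense (Set.range fun n : ℕ => (T ^ (n + 1)) x) := by
  obtain ⟨C, hC, hC_norm⟩ := exists_norm_le_of_norm_le_majorant p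
  refine Metric.dense_iff.2 fun y r hr => ?_
  obtain ⟨v, y', hv, hy'⟩ := exists_finsupp_norm_sub_lt hp y (half_pos hr)
  obtain ⟨n, h_approx, hn⟩ :=
    ((hx v (r / (2 * C)) (by positivity)).and_eventually (eventually_ge_atTop 1)).exists
  obtain ⟨n, rfl⟩ := Nat.exists_eq_add_of_le' hn
  refine ⟨_, (dist_pi_lt_iff hr).2 fun i => ?_, n, rfl⟩
  have h_iterate : ‖(T ^ (n + 1)) x i - y' i‖ ≤ r / (2 * C) * C :=
    hC_norm _ (by positivity) _ fun k => by
      rw [lp.coeFn_sub, Pi.sub_apply, hT.pow_apply, hv]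
      exact h_approx i k
  calc dist ((T ^ (n + 1)) x i) (y i) = ‖((T ^ (n + 1)) x i - y' i) + (y' i - y i)‖ := by
        rw [sub_add_sub_cancel, dist_eq_norm]
    _ < r / (2 * C) * C + r / 2 :=
        (norm_add_le _ _).trans_lt (add_lt_add_of_le_of_lt h_iterate (hy' i))
    _ = r := by field_simp; ring

theorem IsPowerUniversal.exists_ne_zero (hu : IsPowerUniversal w S u) (hlam : lam ∈ S) (i : Fin d) :
    ∃ q, u i q ≠ 0 := by
  obtain ⟨n, hn⟩ :=
    (hu lam hlam 1 one_ne_zero (fun _ => Finsupp.single 0 1) (1 / 2) one_half_pos).exists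
  refine ⟨n, fun h => ?_⟩
  have := hn i 0
  norm_num [h, majorant] at this

/-- The algebra generated by `u`: the vectors `P(u)`, where `P` is a polynomial with zero constant
term. -/
def polynomialVectors (p : ℝ≥0∞) (u : Fin d → ℕ → ℂ) : Set (Fin d → lpC p) :=
  {x | ∃ P : Polynomial ℂ, P.coeff 0 = 0 ∧ ∀ i q, x i q = P.eval (u i q)}

theorem exists_mem_polynomialVectors (p : ℝ≥0∞) [Fact (1 ≤ p)]
    (hu : ∀ i q, ‖u i q‖ ≤ majorant q) {P : Polynomial ℂ} (hP0 : P.coeff 0 = 0) :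
    ∃ x ∈ polynomialVectors p u, ∀ i q, x i q = P.eval (u i q) := by
  obtain ⟨G, rfl⟩ := Polynomial.X_dvd_iff.2 hP0
  obtain ⟨C, hC⟩ := (isCompact_closedBall (0 : ℂ) 1).exists_bound_of_continuousOn
    G.continuous.continuousOn
  have h_mem (i : Fin d) : Memℓp (fun q => (Polynomial.X * G).eval (u i q)) p :=
    memℓp_of_norm_le_majorant (C := C) fun q => by
      have h_ball : u i q ∈ Metric.closedBall (0 : ℂ) 1 :=
        mem_closedBall_zero_iff.2 ((hu i q).trans (majorant_le_one q))
      rw [Polynomial.eval_mul, Polynomial.eval_X, norm_mul, mul_comm]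
      exact mul_le_mul (hC _ h_ball) (hu i q) (norm_nonneg _) ((norm_nonneg _).trans (hC _ h_ball))
  exact ⟨fun i => ⟨_, h_mem i⟩, ⟨_, hP0, fun _ _ => rfl⟩, fun _ _ => rfl⟩

theorem commonHypercyclicAlgebraCW_of_isPowerUniversal {p : ℝ≥0∞} [Fact (1 ≤ p)] (hp : p ≠ ⊤)
    (hd : 0 < d) (hS : S.Nonempty) {T : (Fin d → ℝ) → ((Fin d → lpC p) →L[ℂ] (Fin d → lpC p))}
    (hT : ∀ lam ∈ S, IsProductShift p d w (T lam) lam) (hu : ∀ i q, ‖u i q‖ ≤ majorant q)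
    (hu_univ : IsPowerUniversal w S u) : CommonHypercyclicAlgebraCW p d S T := by
  refine ⟨polynomialVectors p u, ⟨0, by simp⟩, ?_, ?_, ?_, ?_, ?_⟩
  · rintro x ⟨P, hP0, hP⟩ y ⟨Q, hQ0, hQ⟩
    exact ⟨P + Q, by simp [hP0, hQ0], fun i q => by simp [hP, hQ]⟩
  · rintro c x ⟨P, hP0, hP⟩
    exact ⟨Polynomial.C c * P, by simp [hP0], fun i q => by simp [hP]⟩
  · rintro x ⟨P, hP0, hP⟩ y ⟨Q, -, hQ⟩
    obtain ⟨z, hz, hzPQ⟩ := exists_mem_polynomialVectors p hu (P := P * Q) (by simp [hP0])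
    exact ⟨z, hz, fun i q => by rw [hzPQ, Polynomial.eval_mul, hP, hQ]⟩
  · obtain ⟨lam, hlam⟩ := hS
    obtain ⟨q, hq⟩ := hu_univ.exists_ne_zero hlam ⟨0, hd⟩
    obtain ⟨x, hx, hxu⟩ := exists_mem_polynomialVectors p hu Polynomial.coeff_X_zero
    refine ⟨x, hx, fun h => hq ?_⟩
    simpa [h] using (hxu ⟨0, hd⟩ q).symm
  · rintro x ⟨P, hP0, hP⟩ hx lam hlam
    have hP_ne : P ≠ 0 := by
      rintro rfl
      exact hx (funext fun i => lp.ext (funext fun q => by simp [hP]))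
    have hu0 (i : Fin d) : Tendsto (u i) atTop (𝓝 0) := squeeze_zero_norm (hu i) tendsto_majorant
    refine dense_range_pow_of_frequently_approximates hp (hT lam hlam) fun v ε hε => ?_
    simpa only [funext (hP _)] using
      hu_univ.frequently_approximates_eval hu0 hlam hP_ne hP0 v hε

end Criterion

section Gluing

variable {d : ℕ} {w : ℝ → ℕ → ℝ} {S : Set (Fin d → ℝ)} {lam : Fin d → ℝ}

/-- A finite piece of a universal vector: `u` lives below `L`, is smaller than `ε * majorant`, and
for every parameter in `U` some iterate of order between `M` and `L` sends `u ^ m` to within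
`ε * majorant` of `v`. -/
structure IsBlock (w : ℝ → ℕ → ℝ) (U : Set (Fin d → ℝ)) (m : ℕ) (v : Fin d → ℕ →₀ ℂ) (ε : ℝ)
    (M L : ℕ) (u : Fin d → ℕ → ℂ) : Prop where
  lt : M < L
  eq_zero : ∀ i q, L ≤ q → u i q = 0
  norm_le : ∀ i q, ‖u i q‖ ≤ ε * majorant q
  approximates : ∀ lam ∈ U, ∃ n ∈ Set.Ico M L, Approximates w lam (u ^ m) v ε n

theorem Approximates.of_norm_sub_le {x : Fin d → ℕ → ℂ} {v v' : Fin d → ℕ →₀ ℂ} {ε ε' : ℝ} {n : ℕ}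
    (hx : Approximates w lam x v ε n) (hv : ∀ i k, ‖v i k - v' i k‖ ≤ ε' * majorant k) :
    Approximates w lam x v' (ε + ε') n := fun i k => by
  rw [add_mul, ← sub_add_sub_cancel _ (v i k)]
  exact norm_add_le_of_le (hx i k) (hv i k)

theorem exists_countable_dense_finsupp (d : ℕ) :
    ∃ D : Set (Fin d → ℕ →₀ ℂ), D.Countable ∧
      ∀ v : Fin d → ℕ →₀ ℂ, ∀ ε > 0, ∃ v' ∈ D, ∀ i k, ‖v' i k - v i k‖ ≤ ε * majorant k := by
  let e : ℕ → ℂ := fun j => Nat.casesOn j 0 (TopologicalSpace.denseSeq ℂ)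
  have he : DenseRange e := (TopologicalSpace.denseRange_denseSeq ℂ).mono <| by
    rintro _ ⟨j, rfl⟩
    exact ⟨j + 1, rfl⟩
  refine ⟨Set.range fun (σ : Fin d → ℕ →₀ ℕ) i => (σ i).mapRange e rfl, Set.countable_range _,
    fun v ε hε => ?_⟩
  have h_approx : ∀ i k, ∃ j, (v i k = 0 → j = 0) ∧ ‖e j - v i k‖ ≤ ε * majorant k := by
    intro i k
    have hεω : 0 < ε * majorant k := mul_pos hε (majorant_pos k)
    by_cases hv : v i k = 0
    · exact ⟨0, fun _ => rfl, by simpa [e, hv] using hεω.le⟩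
    · obtain ⟨j, hj⟩ := he.exists_dist_lt (v i k) hεω
      exact ⟨j, fun h => absurd h hv, by simpa [dist_eq_norm, norm_sub_rev] using hj.le⟩
  choose j hj0 hj using h_approx
  refine ⟨_, ⟨fun i => Finsupp.onFinset (v i).support (j i) fun k hk =>
    Finsupp.mem_support_iff.2 (mt (hj0 i k) hk), rfl⟩, fun i k => ?_⟩
  simpa using hj i k

theorem exists_seq_frequently_eq (ι : Type*) [Countable ι] [Nonempty ι] :
    ∃ t : ℕ → ι, ∀ j, ∃ᶠ s in atTop, t s = j := by
  obtain ⟨f, hf⟩ := exists_surjective_nat ι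
  refine ⟨fun s => f s.unpair.1, fun j => frequently_atTop.2 fun N => ?_⟩
  obtain ⟨n, rfl⟩ := hf j
  exact ⟨Nat.pair n N, Nat.right_le_pair n N, by simp⟩

theorem exists_galoisConnection_of_strictMono {L : ℕ → ℕ} (hL : StrictMono L) (hL0 : L 0 = 0) :
    ∃ idx : ℕ → ℕ, GaloisConnection L idx := by
  refine ⟨fun q => Nat.findGreatest (fun s => L s ≤ q) q, fun s q =>
    ⟨fun h => Nat.le_findGreatest (hL.le_apply.trans h) h, fun h => (hL.monotone h).trans ?_⟩⟩
  exact Nat.findGreatest_spec (P := fun s => L s ≤ q) (Nat.zero_le _) (hL0.trans_le (Nat.zero_le q))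

theorem norm_weightProd_mul_pow_le {w : ℕ → ℝ} {c δ : ℝ} {n N k m : ℕ} {z : ℂ}
    (hw : ∀ j, |w (j + 1)| ≤ c) (hc : 1 ≤ c) (hnN : n ≤ N) (hm : m ≠ 0) (hδ : δ ≤ 1)
    (hz : ‖z‖ ≤ δ / c ^ N * majorant (n + k)) :
    ‖(weightProd w n k : ℂ) * z ^ m‖ ≤ δ * majorant k := by
  have hcN : 1 ≤ c ^ N := one_le_pow₀ hc
  have hω := majorant_pos (n + k)
  have hz_one : ‖z‖ ≤ 1 := calc
    ‖z‖ ≤ δ / c ^ N * majorant (n + k) := hz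
    _ ≤ 1 * 1 := by
      gcongr
      exacts [(div_le_one (by positivity)).2 (hδ.trans hcN), majorant_le_one _]
    _ = 1 := one_mul 1
  have hδ0 : 0 ≤ δ := by
    have h := (norm_nonneg z).trans hz
    rw [div_mul_eq_mul_div, le_div_iff₀ (by positivity), zero_mul] at h
    exact nonneg_of_mul_nonneg_left h hω
  have h_weight : |weightProd w n k| ≤ c ^ N :=
    (abs_weightProd_le hw n k).trans (pow_le_pow_right₀ hc hnN)
  calc ‖(weightProd w n k : ℂ) * z ^ m‖ = |weightProd w n k| * ‖z‖ ^ m := by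
        rw [norm_mul, norm_pow, Complex.norm_real, Real.norm_eq_abs]
    _ ≤ c ^ N * (δ / c ^ N * majorant (n + k)) := by
        gcongr
        exact (pow_le_of_le_one (norm_nonneg z) hz_one hm).trans hz
    _ = δ * majorant (n + k) := by field_simp
    _ ≤ δ * majorant k := by gcongr; exact majorant_antitone (Nat.le_add_left k n)

/-- Concatenates the blocks `us s` on the intervals `[L s, L (s + 1))`. The later blocks are so
small that they do not disturb the approximations realized by the earlier ones. -/
theorem exists_glued_of_isBlock {U : ℕ → Set (Fin d → ℝ)} {m : ℕ → ℕ} {v : ℕ → Fin d → ℕ →₀ ℂ}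
    {b : ℕ → ℝ} {L : ℕ → ℕ} {us : ℕ → Fin d → ℕ → ℂ} (hm : ∀ s, m s ≠ 0) (hb1 : ∀ s, 1 ≤ b s)
    (hb : Monotone b) (hw : ∀ s, ∀ lam ∈ U s, ∀ i n, |w (lam i) (n + 1)| ≤ b s) (hL0 : L 0 = 0)
    (h_block : ∀ s,
      IsBlock w (U s) (m s) (v s) ((1 / 2) ^ s / b s ^ L s) (L s) (L (s + 1)) (us s)) :
    ∃ u : Fin d → ℕ → ℂ, (∀ i q, ‖u i q‖ ≤ majorant q) ∧
      ∀ s, ∀ lam ∈ U s, ∃ n ≥ s,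
        Approximates w lam (u ^ m s) (v s) ((1 / 2) ^ s + (1 / 2) ^ s) n := by
  have hL : StrictMono L := strictMono_nat_of_lt_succ fun s => (h_block s).lt
  obtain ⟨idx, h_idx⟩ := exists_galoisConnection_of_strictMono hL hL0
  have h_half (s : ℕ) : (1 / 2 : ℝ) ^ s ≤ 1 := pow_le_one₀ one_half_pos.le one_half_lt_one.le
  have h_small (s : ℕ) : (1 / 2 : ℝ) ^ s / b s ^ L s ≤ (1 / 2) ^ s :=
    div_le_self (by positivity) (one_le_pow₀ (hb1 s))
  refine ⟨fun i q => us (idx q) i q, fun i q => ?_, fun s lam hlam => ?_⟩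
  · exact ((h_block (idx q)).norm_le i q).trans
      (mul_le_of_le_one_left (majorant_pos q).le ((h_small _).trans (h_half _)))
  obtain ⟨n, ⟨hLn, hnL⟩, h_approx⟩ := (h_block s).approximates lam hlam
  refine ⟨n, hL.le_apply.trans hLn, fun i k => ?_⟩
  have hω := majorant_pos k
  have h_approx_k := (h_approx i k).trans (mul_le_mul_of_nonneg_right (h_small s) hω.le)
  rw [Pi.pow_apply, Pi.pow_apply] at h_approx_k ⊢
  rcases lt_or_ge (n + k) (L (s + 1)) with hnk | hnk
  · have h_idx_eq : idx (n + k) = s :=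
      le_antisymm (Nat.lt_succ_iff.1 (h_idx.lt_iff_lt.1 hnk))
        (h_idx.le_u (hLn.trans (Nat.le_add_right n k)))
    rw [h_idx_eq]
    exact h_approx_k.trans (by gcongr; simp)
  · rw [(h_block s).eq_zero i _ hnk, zero_pow (hm s), mul_zero, zero_sub, norm_neg] at h_approx_k
    set t := idx (n + k)
    have hst : s + 1 ≤ t := h_idx.le_u hnk
    have h_later := norm_weightProd_mul_pow_le
      (fun j => (hw s lam hlam i j).trans (hb (Nat.le_of_succ_le hst))) (hb1 t)
      (hnL.le.trans (hL.monotone hst)) (hm s) (h_half t) ((h_block t).norm_le i (n + k))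
    rw [add_mul]
    refine norm_sub_le_of_le (h_later.trans ?_) h_approx_k
    gcongr ?_ * _
    exact pow_le_pow_of_le_one one_half_pos.le one_half_lt_one.le (Nat.le_of_succ_le hst)

theorem exists_glued {U : ℕ → Set (Fin d → ℝ)} {m : ℕ → ℕ} {v : ℕ → Fin d → ℕ →₀ ℂ} {B : ℕ → ℝ}
    (hm : ∀ s, m s ≠ 0) (hw : ∀ s, ∀ lam ∈ U s, ∀ i n, |w (lam i) (n + 1)| ≤ B s)
    (h_block : ∀ s, ∀ ε > 0, ∀ M, ∃ L u, IsBlock w (U s) (m s) (v s) ε M L u) :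
    ∃ u : Fin d → ℕ → ℂ, (∀ i q, ‖u i q‖ ≤ majorant q) ∧
      ∀ s, ∀ lam ∈ U s, ∃ n ≥ s,
        Approximates w lam (u ^ m s) (v s) ((1 / 2) ^ s + (1 / 2) ^ s) n := by
  let b : ℕ → ℝ := partialSups fun s => max 1 (B s)
  have hb (s : ℕ) : max 1 (B s) ≤ b s := le_partialSups (fun s => max 1 (B s)) s
  have hb1 (s : ℕ) : 1 ≤ b s := (le_max_left _ _).trans (hb s)
  have h_pos (s M : ℕ) : 0 < (1 / 2 : ℝ) ^ s / b s ^ M := by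
    have := zero_lt_one.trans_le (hb1 s)
    positivity
  choose L' us h_us using fun s M => h_block s _ (h_pos s M) M
  let L : ℕ → ℕ := fun s => Nat.rec 0 L' s
  exact exists_glued_of_isBlock hm hb1 (partialSups_monotone _)
    (fun s lam hlam i n => (hw s lam hlam i n).trans ((le_max_right _ _).trans (hb s)))
    (L := L) rfl fun s => h_us s (L s)

/-- A universal vector exists as soon as blocks exist locally in the parameter: countably many
neighbourhoods cover `S`, and together with countably many targets and all powers they give
countably many tasks, each of which is realized infinitely often. -/
theorem exists_isPowerUniversal (hS : S.Nonempty)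
    (h_local : ∀ lam ∈ S, ∃ U ∈ 𝓝[S] lam, (∃ b, ∀ lam' ∈ U, ∀ i n, |w (lam' i) (n + 1)| ≤ b) ∧
      ∀ m ≠ 0, ∀ v, ∀ ε > 0, ∀ M, ∃ L u, IsBlock w U m v ε M L u) :
    ∃ u : Fin d → ℕ → ℂ, (∀ i q, ‖u i q‖ ≤ majorant q) ∧ IsPowerUniversal w S u := by
  choose! U hU hw h_block using h_local
  obtain ⟨t, htS, ht_count, ht_cover⟩ := TopologicalSpace.countable_cover_nhdsWithin hU
  obtain ⟨D, hD_count, hD⟩ := exists_countable_dense_finsupp d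
  have : Countable t := ht_count
  have : Countable D := hD_count
  have : Nonempty t := by
    obtain ⟨lam, hlam⟩ := hS
    obtain ⟨j, hj, -⟩ := Set.mem_iUnion₂.1 (ht_cover hlam)
    exact ⟨j, hj⟩
  have : Nonempty D := by
    obtain ⟨v, hv, -⟩ := hD 0 1 one_pos
    exact ⟨v, hv⟩
  choose! B hB using hw
  obtain ⟨task, h_task⟩ := exists_seq_frequently_eq (t × ℕ × D)
  obtain ⟨u, hu, hu_approx⟩ := exists_glued (fun s => (task s).2.1.succ_ne_zero)
    (fun s => hB _ (htS (task s).1.2)) fun s =>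
      h_block _ (htS (task s).1.2) _ (task s).2.1.succ_ne_zero ((task s).2.2 : Fin d → ℕ →₀ ℂ)
  refine ⟨u, hu, fun lam hlam m hm v ε hε => frequently_atTop.2 fun N => ?_⟩
  obtain ⟨j, hj, hlam_j⟩ := Set.mem_iUnion₂.1 (ht_cover hlam)
  obtain ⟨m, rfl⟩ := Nat.exists_eq_succ_of_ne_zero hm
  obtain ⟨v', hv', hv'v⟩ := hD v (ε / 2) (half_pos hε)
  have h_small : ∀ᶠ s : ℕ in atTop, (1 / 2 : ℝ) ^ s < ε / 4 :=
    (tendsto_pow_atTop_nhds_zero_of_lt_one one_half_pos.le one_half_lt_one).eventually_lt_const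
      (by positivity)
  obtain ⟨s, h_s, hs_small, hsN⟩ := ((h_task (⟨j, hj⟩, m, ⟨v', hv'⟩)).and_eventually
    (h_small.and (eventually_ge_atTop N))).exists
  obtain ⟨n, hn, h_approx⟩ := hu_approx s lam (by simpa only [h_s] using hlam_j)
  rw [h_s] at h_approx
  refine ⟨n, hsN.trans hn, fun i k => (h_approx.of_norm_sub_le hv'v i k).trans ?_⟩
  have := majorant_pos k
  gcongr
  linarith

end Gluing

section HolderNet

variable {d : ℕ} {α C ρ : ℝ} {N : ℕ} {ι : Type*} {pos : ι → ℕ} {pt : ι → Fin d → ℝ}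

/-- The points `pt j` form a `ρ`-net of the unit cube, and are visited at the times
`pos j ∈ {0, …, N - 1}` along an `α`-Hölder path, time being rescaled by `N`. -/
structure IsHolderNet (α C : ℝ) (N : ℕ) (ρ : ℝ) (pos : ι → ℕ) (pt : ι → Fin d → ℝ) : Prop where
  pos_lt : ∀ j, pos j < N
  mem_Icc : ∀ j, pt j ∈ Set.Icc 0 1
  exists_dist_le : ∀ y ∈ Set.Icc (0 : Fin d → ℝ) 1, ∃ j, dist y (pt j) ≤ ρ
  dist_le : ∀ j j', pos j ≤ pos j' →
    dist (pt j) (pt j') ≤ C * (((pos j' : ℝ) - pos j) / N) ^ α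

theorem IsHolderNet.eq_of_pos_eq (h : IsHolderNet α C N ρ pos pt) (hα : α ≠ 0) {j j' : ι}
    (hjj' : pos j = pos j') : pt j = pt j' :=
  dist_le_zero.1 <| by simpa [hjj', Real.zero_rpow hα] using h.dist_le j j' hjj'.le

theorem IsHolderNet.mono {ρ' : ℝ} (h : IsHolderNet α C N ρ pos pt) (hρ : ρ ≤ ρ') :
    IsHolderNet α C N ρ' pos pt where
  __ := h
  exists_dist_le y hy := (h.exists_dist_le y hy).imp fun _ hj => hj.trans hρ

theorem dist_le_one_of_mem_Icc {y y' : Fin d → ℝ} (hy : y ∈ Set.Icc 0 1) (hy' : y' ∈ Set.Icc 0 1) :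
    dist y y' ≤ 1 :=
  (dist_pi_le_iff zero_le_one).2 fun i => by
    simpa using Real.dist_le_of_mem_Icc_01 ⟨hy.1 i, hy.2 i⟩ ⟨hy'.1 i, hy'.2 i⟩

theorem isHolderNet_zero (hC : 0 ≤ C) :
    IsHolderNet α C 1 1 (fun _ : Unit => 0) fun _ => (0 : Fin d → ℝ) where
  pos_lt _ := one_pos
  mem_Icc _ := ⟨le_rfl, zero_le_one⟩
  exists_dist_le y hy := ⟨(), dist_le_one_of_mem_Icc hy ⟨le_rfl, zero_le_one⟩⟩
  dist_le _ _ _ := by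
    rw [dist_self]
    positivity

/-- The affine map of the unit cube onto the cube of index `σ` in its subdivision into `Q ^ d`
equal cubes. -/
def subcubeMap {Q : ℕ} (σ : Fin d → Fin Q) (y : Fin d → ℝ) : Fin d → ℝ :=
  (Q : ℝ)⁻¹ • ((fun i => ((σ i : ℕ) : ℝ)) + y)

theorem dist_subcubeMap {Q : ℕ} (σ : Fin d → Fin Q) (y y' : Fin d → ℝ) :
    dist (subcubeMap σ y) (subcubeMap σ y') = (Q : ℝ)⁻¹ * dist y y' := by
  rw [subcubeMap, subcubeMap, dist_smul₀, dist_add_left, Real.norm_of_nonneg (by positivity)]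

theorem subcubeMap_mem_Icc {Q : ℕ} (σ : Fin d → Fin Q) {y : Fin d → ℝ} (hy : y ∈ Set.Icc 0 1) :
    subcubeMap σ y ∈ Set.Icc 0 1 := by
  refine ⟨fun i => ?_, fun i => ?_⟩
  · exact mul_nonneg (by positivity) (add_nonneg (Nat.cast_nonneg _) (hy.1 i))
  · have h_succ : ((σ i : ℕ) : ℝ) + 1 ≤ Q := by exact_mod_cast (σ i).isLt
    have hQ : (0 : ℝ) < Q := by exact_mod_cast (Nat.zero_le _).trans_lt (σ i).isLt
    rw [subcubeMap, Pi.smul_apply, smul_eq_mul, Pi.one_apply, inv_mul_le_one₀ hQ]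
    exact (add_le_add_right (hy.2 i) _).trans h_succ

theorem exists_subcubeMap_eq {Q : ℕ} (hQ : 0 < Q) {y : Fin d → ℝ} (hy : y ∈ Set.Icc 0 1) :
    ∃ σ : Fin d → Fin Q, ∃ y' ∈ Set.Icc 0 1, subcubeMap σ y' = y := by
  have h_coord (i : Fin d) : ∃ s : Fin Q, (Q : ℝ) * y i - (s : ℕ) ∈ Set.Icc 0 1 := by
    rcases (hy.2 i).eq_or_lt with h | h
    · exact ⟨⟨Q - 1, Nat.sub_one_lt_of_lt hQ⟩, by simp [h, Nat.cast_sub (Nat.succ_le_of_lt hQ)]⟩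
    · have h0 : 0 ≤ (Q : ℝ) * y i := mul_nonneg (Nat.cast_nonneg Q) (hy.1 i)
      refine ⟨⟨⌊(Q : ℝ) * y i⌋₊, (Nat.floor_lt h0).2 ?_⟩, sub_nonneg.2 (Nat.floor_le h0),
        sub_left_le_of_le_add (Nat.lt_floor_add_one _).le⟩
      exact mul_lt_of_lt_one_right (Nat.cast_pos.2 hQ) h
  choose σ hσ using h_coord
  refine ⟨σ, fun i => (Q : ℝ) * y i - (σ i : ℕ), ⟨fun i => (hσ i).1, fun i => (hσ i).2⟩, ?_⟩
  ext i
  have : (Q : ℝ) ≠ 0 := Nat.cast_ne_zero.2 hQ.ne'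
  simp [subcubeMap, this]

theorem add_le_of_two_mul_add_le_of_ne {c c' r r' : ℕ} (hr : r < N) (hr' : r' < N)
    (h_le : 2 * N * c + r ≤ 2 * N * c' + r') (hcc' : c ≠ c') :
    2 * N * c + r + N ≤ 2 * N * c' + r' := by
  rcases hcc'.lt_or_gt with h | h <;> nlinarith

theorem inv_mul_rpow_div_le {Q b N Δ : ℝ} (hQ : 0 < Q) (hb : 0 < b) (hN : 0 < N) (hΔ : 0 ≤ Δ)
    (hbQ : b ^ α ≤ Q) (hC : 0 ≤ C) :
    Q⁻¹ * (C * (Δ / N) ^ α) ≤ C * (Δ / (b * N)) ^ α := calc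
  Q⁻¹ * (C * (Δ / N) ^ α) = Q⁻¹ * (C * (b * (Δ / (b * N))) ^ α) := by
    rw [mul_div_assoc', mul_div_mul_left _ _ hb.ne']
  _ = b ^ α / Q * (C * (Δ / (b * N)) ^ α) := by
    rw [Real.mul_rpow hb.le (by positivity)]
    ring
  _ ≤ 1 * (C * (Δ / (b * N)) ^ α) := by
    gcongr
    exact (div_le_one hQ).2 hbQ
  _ = C * (Δ / (b * N)) ^ α := one_mul _

theorem one_le_mul_rpow_div {b N Δ : ℝ} (hα : 0 ≤ α) (hb : 0 < b) (hN : 0 < N) (hbC : b ^ α ≤ C)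
    (hΔ : N ≤ Δ) : 1 ≤ C * (Δ / (b * N)) ^ α := calc
  1 = b ^ α * (N / (b * N)) ^ α := by
    rw [div_mul_cancel_right₀ hN.ne', ← Real.mul_rpow hb.le (by positivity),
      mul_inv_cancel₀ hb.ne', Real.one_rpow]
  _ ≤ C * (Δ / (b * N)) ^ α := by
    have hC : 0 ≤ C := (Real.rpow_nonneg hb.le α).trans hbC
    gcongr

/-- A rescaled copy of the net is visited in each of the `Q ^ d` subcubes, with a pause of length
`N` after each copy, which leaves enough time to jump to the next subcube. -/
theorem IsHolderNet.subdivide (h : IsHolderNet α C N ρ pos pt) (hα : 0 ≤ α) {Q b : ℕ} (hQ : 0 < Q)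
    (hb : b = 2 * Q ^ d) (hbQ : (b : ℝ) ^ α ≤ Q) (hbC : (b : ℝ) ^ α ≤ C) :
    IsHolderNet α C (b * N) ((Q : ℝ)⁻¹ * ρ)
      (fun x : (Fin d → Fin Q) × ι => 2 * N * finFunctionFinEquiv x.1 + pos x.2)
      (fun x => subcubeMap x.1 (pt x.2)) := by
  have hQ' : (0 : ℝ) < Q := Nat.cast_pos.2 hQ
  have hb0 : (0 : ℝ) < b := by rw [hb]; positivity
  have hC : 0 ≤ C := (by positivity : 0 ≤ (b : ℝ) ^ α).trans hbC
  have h_mem (x : (Fin d → Fin Q) × ι) : subcubeMap x.1 (pt x.2) ∈ Set.Icc 0 1 :=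
    subcubeMap_mem_Icc x.1 (h.mem_Icc x.2)
  refine ⟨fun x => ?_, h_mem, fun y hy => ?_, fun x x' hxx' => ?_⟩
  · have h_pos := h.pos_lt x.2
    have h_code : (finFunctionFinEquiv x.1 : ℕ) + 1 ≤ Q ^ d := (finFunctionFinEquiv x.1).isLt
    rw [hb]
    nlinarith
  · obtain ⟨σ, y', hy', rfl⟩ := exists_subcubeMap_eq hQ hy
    obtain ⟨j, hj⟩ := h.exists_dist_le y' hy'
    exact ⟨(σ, j), by rw [dist_subcubeMap]; gcongr⟩
  have hN : (0 : ℝ) < N := Nat.cast_pos.2 ((Nat.zero_le _).trans_lt (h.pos_lt x.2))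
  rcases eq_or_ne x.1 x'.1 with hσ | hσ
  · rw [hσ, add_le_add_iff_left] at hxx'
    have h_gap : 0 ≤ (pos x'.2 : ℝ) - pos x.2 := sub_nonneg.2 (Nat.cast_le.2 hxx')
    calc dist (subcubeMap x.1 (pt x.2)) (subcubeMap x'.1 (pt x'.2))
        = (Q : ℝ)⁻¹ * dist (pt x.2) (pt x'.2) := by rw [hσ, dist_subcubeMap]
      _ ≤ (Q : ℝ)⁻¹ * (C * (((pos x'.2 : ℝ) - pos x.2) / N) ^ α) := by
          gcongr
          exact h.dist_le _ _ hxx'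
      _ ≤ C * (((pos x'.2 : ℝ) - pos x.2) / (b * N)) ^ α :=
          inv_mul_rpow_div_le hQ' hb0 hN h_gap hbQ hC
      _ = _ := by rw [hσ]; push_cast; ring_nf
  · have h_gap : 2 * N * (finFunctionFinEquiv x.1 : ℕ) + pos x.2 + N
        ≤ 2 * N * (finFunctionFinEquiv x'.1 : ℕ) + pos x'.2 :=
      add_le_of_two_mul_add_le_of_ne (h.pos_lt x.2) (h.pos_lt x'.2) hxx'
        (Fin.val_injective.ne (finFunctionFinEquiv.injective.ne hσ))
    refine (dist_le_one_of_mem_Icc (h_mem x) (h_mem x')).trans ?_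
    rw [Nat.cast_mul b]
    refine one_le_mul_rpow_div hα hb0 hN hbC ?_
    rw [le_sub_iff_add_le']
    exact_mod_cast h_gap

theorem exists_two_mul_pow_rpow_lt (hαd : α * d < 1) :
    ∃ Q : ℕ, 0 < Q ∧ ((2 * Q ^ d : ℕ) : ℝ) ^ α < Q := by
  have h_lim : Tendsto (fun Q : ℕ => (Q : ℝ) ^ (1 - α * d)) atTop atTop :=
    (tendsto_rpow_atTop (sub_pos.2 hαd)).comp tendsto_natCast_atTop_atTop
  obtain ⟨Q, hQ, hQ0⟩ :=
    ((h_lim.eventually_gt_atTop (2 ^ α)).and (eventually_gt_atTop 0)).exists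
  have hQ0' : (0 : ℝ) < Q := Nat.cast_pos.2 hQ0
  refine ⟨Q, hQ0, ?_⟩
  calc ((2 * Q ^ d : ℕ) : ℝ) ^ α = 2 ^ α * (Q : ℝ) ^ (α * d) := by
        rw [Nat.cast_mul, Nat.cast_pow, Nat.cast_ofNat, Real.mul_rpow zero_le_two (by positivity),
          ← Real.rpow_natCast_mul hQ0'.le, mul_comm (d : ℝ)]
    _ < (Q : ℝ) ^ (1 - α * d) * (Q : ℝ) ^ (α * d) := by gcongr
    _ = Q := by rw [← Real.rpow_add hQ0', sub_add_cancel, Real.rpow_one]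

theorem exists_isHolderNet (hα : 0 ≤ α) (hαd : α * d < 1) :
    ∃ C > 0, ∀ δ > 0, ∀ N₀ : ℕ, ∃ N ≥ N₀, ∃ (ι : Type) (pos : ι → ℕ) (pt : ι → Fin d → ℝ),
      IsHolderNet α C N (δ / (N : ℝ) ^ α) pos pt := by
  obtain ⟨Q, hQ, hbQ⟩ := exists_two_mul_pow_rpow_lt hαd
  set b : ℕ := 2 * Q ^ d with hb
  have hQ' : (0 : ℝ) < Q := Nat.cast_pos.2 hQ
  have hb1 : 1 < b := one_lt_two.trans_le (Nat.le_mul_of_pos_right 2 (Nat.pow_pos hQ))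
  have hb0 : (0 : ℝ) < b := Nat.cast_pos.2 (one_pos.trans hb1)
  have h_net (k : ℕ) : ∃ (ι : Type) (pos : ι → ℕ) (pt : ι → Fin d → ℝ),
      IsHolderNet α ((b : ℝ) ^ α) (b ^ k) ((Q : ℝ)⁻¹ ^ k) pos pt := by
    induction k with
    | zero => exact ⟨_, _, _, by simpa using isHolderNet_zero (by positivity)⟩
    | succ k ih =>
      obtain ⟨ι, pos, pt, h⟩ := ih
      exact ⟨_, _, _, by simpa only [pow_succ'] using h.subdivide hα hQ hb hbQ.le le_rfl⟩
  refine ⟨(b : ℝ) ^ α, by positivity, fun δ hδ N₀ => ?_⟩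
  have h_small : ∀ᶠ k : ℕ in atTop, ((b : ℝ) ^ α / Q) ^ k < δ :=
    (tendsto_pow_atTop_nhds_zero_of_lt_one (by positivity)
      ((div_lt_one hQ').2 hbQ)).eventually_lt_const hδ
  obtain ⟨k, hk, hkN⟩ :=
    (h_small.and ((tendsto_pow_atTop_atTop_of_one_lt hb1).eventually_ge_atTop N₀)).exists
  obtain ⟨ι, pos, pt, h⟩ := h_net k
  refine ⟨b ^ k, hkN, ι, pos, pt, h.mono ?_⟩
  rw [le_div_iff₀ (by positivity), Nat.cast_pow, ← Real.rpow_pow_comm hb0.le, ← mul_pow, mul_comm,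
    ← div_eq_mul_inv]
  exact hk.le

end HolderNet

section CellPattern

variable {ι : Type*} {α : ℝ} {m R : ℕ} {T : ι → ℕ} {μ : ι → ℝ} {v u : ℕ → ℂ} {c A W δ E l : ℝ}

theorem eventually_mul_exp_neg_rpow_le (hα : 0 < α) (hc : 0 < c) (B : ℝ) {β : ℝ} (hβ : 0 < β)
    (m : ℕ) : ∀ᶠ q : ℕ in atTop, B * Real.exp (-(c * (q : ℝ) ^ α)) ≤ β * majorant q ^ m := by
  have h_lim : Tendsto (fun q : ℕ => ((q : ℝ) + 1) ^ α) atTop atTop :=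
    (tendsto_rpow_atTop hα).comp (tendsto_natCast_atTop_atTop.atTop_add tendsto_const_nhds)
  have h_littleO := ((isLittleO_exp_neg_mul_rpow_atTop (a := c / 2 ^ α) (by positivity)
    (-(2 * m : ℕ) / α)).comp_tendsto h_lim).const_mul_left |B|
  filter_upwards [h_littleO.def hβ, eventually_ge_atTop 1] with q hq hq1
  have hq1' : (1 : ℝ) ≤ q := Nat.one_le_cast.2 hq1
  have h_exponent : c / 2 ^ α * ((q : ℝ) + 1) ^ α ≤ c * (q : ℝ) ^ α := by
    rw [div_mul_eq_mul_div, mul_div_assoc, ← Real.div_rpow (by positivity) zero_le_two]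
    gcongr
    linarith
  have h_majorant : (((q : ℝ) + 1) ^ α) ^ (-(2 * m : ℕ) / α) = majorant q ^ m := by
    rw [← Real.rpow_mul (by positivity), mul_div_cancel₀ _ hα.ne', Real.rpow_neg (by positivity),
      Real.rpow_natCast, pow_mul, majorant, one_div, inv_pow]
  calc B * Real.exp (-(c * (q : ℝ) ^ α))
      ≤ |B| * Real.exp (-(c / 2 ^ α) * ((q : ℝ) + 1) ^ α) := by
        rw [neg_mul]
        gcongr
        exact le_abs_self B
    _ ≤ β * ‖(((q : ℝ) + 1) ^ α) ^ (-(2 * m : ℕ) / α)‖ := (le_abs_self _).trans hq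
    _ = β * majorant q ^ m := by
        rw [h_majorant, Real.norm_of_nonneg (pow_nonneg (majorant_pos q).le m)]

/-- `u` lives on the cells `[R * T j, R * T j + R)`. On the cell of index `j`, the power `u ^ m` is
the preimage of `v` under the iterate of order `R * T j` of the weighted shift with weights
`wExp α (μ j)`. -/
structure IsCellPattern (α : ℝ) (m R : ℕ) (T : ι → ℕ) (μ : ι → ℝ) (v u : ℕ → ℂ) : Prop where
  weightProd_mul_pow : ∀ j, ∀ k < R,
    (weightProd (wExp α (μ j)) (R * T j) k : ℂ) * u (R * T j + k) ^ m = v k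
  exists_of_ne_zero : ∀ q, u q ≠ 0 → ∃ j, ∃ k < R, q = R * T j + k

theorem weightProd_wExp_pos (α a : ℝ) (n k : ℕ) : 0 < weightProd (wExp α a) n k := by
  rw [weightProd_wExp]
  exact Real.exp_pos _

theorem exists_isCellPattern (α : ℝ) (hm : m ≠ 0) (R : ℕ) (hμ : ∀ j j', T j = T j' → μ j = μ j')
    (v : ℕ → ℂ) : ∃ u, IsCellPattern α m R T μ v u := by
  let f : ι × Fin R → ℕ := fun x => R * T x.1 + x.2
  let g : ι × Fin R → ℂ := fun x => v x.2 / weightProd (wExp α (μ x.1)) (R * T x.1) x.2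
  have h_factors : g.FactorsThrough f := by
    rintro ⟨j, k, hk⟩ ⟨j', k', hk'⟩ h
    have hR : 0 < R := (Nat.zero_le k).trans_lt hk
    have h_div : T j = T j' := by
      have := congrArg (· / R) h
      simpa only [f, Nat.mul_add_div hR, Nat.div_eq_of_lt hk, Nat.div_eq_of_lt hk', add_zero]
        using this
    have h_mod : k = k' := by simpa only [f, h_div, Nat.add_left_cancel_iff] using h
    simp only [g, h_mod, h_div, hμ j j' h_div]
  refine ⟨fun q => Function.extend f g 0 q ^ ((m : ℂ)⁻¹), fun j k hk => ?_, fun q hq => ?_⟩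
  · have h_ne : (weightProd (wExp α (μ j)) (R * T j) k : ℂ) ≠ 0 :=
      Complex.ofReal_ne_zero.2 (weightProd_wExp_pos _ _ _ _).ne'
    have h_eq : Function.extend f g 0 (R * T j + k) = g (j, ⟨k, hk⟩) :=
      h_factors.extend_apply 0 (j, ⟨k, hk⟩)
    rw [h_eq, Complex.cpow_nat_inv_pow _ hm, mul_div_cancel₀ _ h_ne]
  · by_contra! h_notMem
    refine hq ?_
    rw [Function.extend_apply' _ _ _ fun ⟨x, hx⟩ => h_notMem x.1 x.2 x.2.isLt hx.symm,
      Pi.zero_apply, Complex.zero_cpow (by simpa using hm)]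

namespace IsCellPattern

theorem eq_zero_of_lt (hu : IsCellPattern α m R T μ v u) {N q : ℕ} (hT : ∀ j, N ≤ T j)
    (hq : q < R * N) : u q = 0 := by
  by_contra h
  obtain ⟨j, k, -, rfl⟩ := hu.exists_of_ne_zero q h
  nlinarith [hT j]

theorem eq_zero_of_le (hu : IsCellPattern α m R T μ v u) {N q : ℕ} (hT : ∀ j, T j < N)
    (hq : R * N ≤ q) : u q = 0 := by
  by_contra h
  obtain ⟨j, k, hk, rfl⟩ := hu.exists_of_ne_zero q h
  nlinarith [hT j]

theorem weightProd_mul_pow_eq (hu : IsCellPattern α m R T μ v u) (n k : ℕ) {j : ι} {k' : ℕ}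
    (hk' : k' < R) (hnk : n + k = R * T j + k') (l : ℝ) :
    (weightProd (wExp α l) n k : ℂ) * u (n + k) ^ m =
      (Real.exp ((l - μ j) * ((n + k : ℕ) : ℝ) ^ α + μ j * (k' : ℝ) ^ α - l * (k : ℝ) ^ α) : ℝ)
        * v k' := by
  rw [← hu.weightProd_mul_pow j k' hk', hnk, ← mul_assoc, ← Complex.ofReal_mul, weightProd_wExp,
    weightProd_wExp, ← Real.exp_add, hnk]
  ring_nf

theorem norm_weightProd_mul_pow_le (hu : IsCellPattern α m R T μ v u) (hm : m ≠ 0)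
    (hμ : ∀ j, μ j ≤ A) (hW : ∀ k : ℕ, ‖v k‖ * Real.exp (A * (k : ℝ) ^ α) ≤ W) {n k : ℕ}
    (hl : ∀ j, ∀ k' < R, n + k = R * T j + k' →
      (l - μ j) * ((n + k : ℕ) : ℝ) ^ α - l * (k : ℝ) ^ α ≤ E) :
    ‖(weightProd (wExp α l) n k : ℂ) * u (n + k) ^ m‖ ≤ W * Real.exp E := by
  have hW0 : 0 ≤ W := le_trans (by positivity) (hW 0)
  rcases eq_or_ne (u (n + k)) 0 with h | h
  · rw [h, zero_pow hm, mul_zero, norm_zero]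
    positivity
  obtain ⟨j, k', hk', hnk⟩ := hu.exists_of_ne_zero _ h
  rw [hu.weightProd_mul_pow_eq n k hk' hnk, norm_mul, Complex.norm_real, Real.norm_eq_abs,
    Real.abs_exp, mul_comm]
  calc ‖v k'‖ * Real.exp ((l - μ j) * ((n + k : ℕ) : ℝ) ^ α + μ j * (k' : ℝ) ^ α - l * (k : ℝ) ^ α)
      ≤ ‖v k'‖ * Real.exp (A * (k' : ℝ) ^ α + E) := by
        have := mul_le_mul_of_nonneg_right (hμ j) (by positivity : 0 ≤ (k' : ℝ) ^ α)
        gcongr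
        linarith [hl j k' hk' hnk]
    _ = ‖v k'‖ * Real.exp (A * (k' : ℝ) ^ α) * Real.exp E := by rw [Real.exp_add, mul_assoc]
    _ ≤ W * Real.exp E := by
        gcongr
        exact hW k'

theorem norm_pow_le (hu : IsCellPattern α m R T μ v u) (hm : m ≠ 0)
    (hμ : ∀ j, μ j ∈ Set.Icc c A) (hW : ∀ k : ℕ, ‖v k‖ * Real.exp (A * (k : ℝ) ^ α) ≤ W) (q : ℕ) :
    ‖u q‖ ^ m ≤ W * Real.exp (-(c * (q : ℝ) ^ α)) := by
  have h := hu.norm_weightProd_mul_pow_le (n := 0) (k := q) (l := 0) (E := -(c * (q : ℝ) ^ α)) hm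
    (fun j => (hμ j).2) hW fun j _ _ _ => by
      rw [zero_add, zero_mul, sub_zero, zero_sub, neg_mul, neg_le_neg_iff]
      gcongr
      exact (hμ j).1
  simpa [weightProd] using h

theorem norm_weightProd_mul_pow_sub_le (hu : IsCellPattern α m R T μ v u) {j : ι} {k : ℕ}
    (hα : 0 ≤ α) (hk : k < R) (hδ : δ ≤ 1)
    (hl : |l - μ j| * ((R * T j + k : ℕ) : ℝ) ^ α ≤ δ) :
    ‖(weightProd (wExp α l) (R * T j) k : ℂ) * u (R * T j + k) ^ m - v k‖ ≤ 2 * δ * ‖v k‖ := by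
  set x : ℝ := (l - μ j) * (((R * T j + k : ℕ) : ℝ) ^ α - (k : ℝ) ^ α) with hx
  have h_mono : (k : ℝ) ^ α ≤ ((R * T j + k : ℕ) : ℝ) ^ α := by
    gcongr
    exact Nat.le_add_left _ _
  have hx_le : |x| ≤ δ := calc
    |x| = |l - μ j| * (((R * T j + k : ℕ) : ℝ) ^ α - (k : ℝ) ^ α) := by
      rw [hx, abs_mul, abs_of_nonneg (sub_nonneg.2 h_mono)]
    _ ≤ |l - μ j| * ((R * T j + k : ℕ) : ℝ) ^ α := by
      gcongr
      exact sub_le_self _ (by positivity)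
    _ ≤ δ := hl
  have h_eq : (weightProd (wExp α l) (R * T j) k : ℂ) * u (R * T j + k) ^ m - v k
      = ((Real.exp x - 1 : ℝ) : ℂ) * v k := by
    rw [hu.weightProd_mul_pow_eq _ _ hk rfl, Complex.ofReal_sub, Complex.ofReal_one, sub_one_mul,
      hx]
    ring_nf
  rw [h_eq, norm_mul, Complex.norm_real, Real.norm_eq_abs]
  gcongr
  exact (Real.abs_exp_sub_one_le (hx_le.trans hδ)).trans (by gcongr)

end IsCellPattern

end CellPattern

section ExponentialBlocks

variable {d : ℕ} {ι : Type*} {α C δ E c A V W ε η : ℝ} {m M N R : ℕ} {T : ι → ℕ}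

/-- Beyond the first `R` coordinates, the iterate of order `R * T j₀` only sees cells visited after
that of `j₀`. The drift of the parameter between two cells is controlled by the time elapsed, so
that its effect `E * k ^ α` is absorbed by the decay `l * k ^ α` of the shifted vector. -/
theorem IsCellPattern.norm_weightProd_mul_pow_le_of_le {μ : ι → ℝ} {v u : ℕ → ℂ} {l : ℝ}
    (hu : IsCellPattern α m R T μ v u) (hm : m ≠ 0) (hα : 0 ≤ α) (hμ : ∀ j, μ j ≤ A)
    (hW : ∀ k : ℕ, ‖v k‖ * Real.exp (A * (k : ℝ) ^ α) ≤ W) (hT : ∀ j, T j < N) {j₀ : ι}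
    (hE : 0 ≤ E) (hl : E + c ≤ l)
    (h_dist : ∀ j, T j₀ ≤ T j →
      |l - μ j| * ((R * N : ℕ) : ℝ) ^ α ≤ δ + E * ((R : ℝ) * ((T j : ℝ) - T j₀)) ^ α)
    {k : ℕ} (hk : R ≤ k) :
    ‖(weightProd (wExp α l) (R * T j₀) k : ℂ) * u (R * T j₀ + k) ^ m‖
      ≤ W * Real.exp (δ - c * (k : ℝ) ^ α) := by
  refine hu.norm_weightProd_mul_pow_le hm hμ hW fun j k' hk' hnk => ?_
  have hTj : T j₀ ≤ T j := by
    by_contra! h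
    nlinarith
  have h_gap : (R : ℝ) * ((T j : ℝ) - T j₀) ≤ k := by
    have h_cast : (R : ℝ) * T j₀ + k = R * T j + k' := by exact_mod_cast hnk
    linarith [k'.cast_nonneg (α := ℝ)]
  have h_lt : R * T j₀ + k ≤ R * N := by nlinarith [hT j]
  have h_upper : (l - μ j) * ((R * T j₀ + k : ℕ) : ℝ) ^ α ≤ δ + E * (k : ℝ) ^ α := calc
    (l - μ j) * ((R * T j₀ + k : ℕ) : ℝ) ^ α ≤ |l - μ j| * ((R * N : ℕ) : ℝ) ^ α := by
      gcongr
      exact le_abs_self _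
    _ ≤ δ + E * ((R : ℝ) * ((T j : ℝ) - T j₀)) ^ α := h_dist j hTj
    _ ≤ δ + E * (k : ℝ) ^ α := by
      have h_nonneg : 0 ≤ (T j : ℝ) - T j₀ := sub_nonneg.2 (Nat.cast_le.2 hTj)
      gcongr
  have := mul_le_mul_of_nonneg_right hl (by positivity : 0 ≤ (k : ℝ) ^ α)
  linarith

/-- Cells of length `R` contain the support of the target `v`, and beyond `R` the stretched
exponentials with rate `c` are negligible. The constant `W` bounds the size of an `m`-th power of a
cell pattern for `v` whose parameters are at most `A`. -/
structure IsCellLength (α c A W ε : ℝ) (m : ℕ) (v : Fin d → ℕ →₀ ℂ) (R : ℕ) : Prop where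
  one_le : 1 ≤ R
  eq_zero : ∀ i, ∀ k ≥ R, v i k = 0
  norm_mul_exp_le : ∀ i, ∀ k : ℕ, ‖v i k‖ * Real.exp (A * (k : ℝ) ^ α) ≤ W
  mul_exp_one_sub_le : ∀ k ≥ R, W * Real.exp (1 - c * (k : ℝ) ^ α) ≤ ε * majorant k
  mul_exp_neg_le : ∀ k ≥ R, W * Real.exp (-(c * (k : ℝ) ^ α)) ≤ ε ^ m * majorant k ^ m

theorem exists_isCellLength (hα : 0 < α) (hc : 0 < c) (A : ℝ) (hε : 0 < ε) (m : ℕ)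
    (v : Fin d → ℕ →₀ ℂ) : ∃ W R, IsCellLength α c A W ε m v R := by
  choose W' _ hW' using fun i =>
    exists_norm_mul_le_of_finsupp (v i) fun k => Real.exp (A * (k : ℝ) ^ α)
  obtain ⟨W, hW⟩ := Finite.exists_le W'
  have h_support : ∀ᶠ R : ℕ in atTop, ∀ i, ∀ k ≥ R, v i k = 0 := by
    refine eventually_all.2 fun i => eventually_forall_ge_atTop.2 ?_
    simpa [Nat.cofinite_eq_atTop] using (v i).hasFiniteSupport.eventually_cofinite_notMem
  have h_one_sub := eventually_mul_exp_neg_rpow_le hα hc (W * Real.exp 1) hε 1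
  have h_neg := eventually_mul_exp_neg_rpow_le hα hc W (pow_pos hε m) m
  obtain ⟨R, hR, hRv, hR_one_sub, hR_neg⟩ := ((eventually_ge_atTop 1).and <| h_support.and <|
    (eventually_forall_ge_atTop.2 h_one_sub).and (eventually_forall_ge_atTop.2 h_neg)).exists
  refine ⟨W, R, hR, hRv, fun i k => (hW' i k).trans (hW i), fun k hk => ?_, hR_neg⟩
  simpa only [sub_eq_add_neg, Real.exp_add, pow_one, mul_assoc] using hR_one_sub k hk

theorem approximates_of_isCellPattern {μ : ι → Fin d → ℝ} {v : Fin d → ℕ →₀ ℂ}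
    {u : Fin d → ℕ → ℂ} {lam : Fin d → ℝ}
    (hu : ∀ i, IsCellPattern α m R T (fun j => μ j i) (v i) (u i)) (hm : m ≠ 0) (hα : 0 < α)
    (hR : IsCellLength α c A W ε m v R) (hμ : ∀ j i, μ j i ≤ A)
    (hV : ∀ i k, ‖v i k‖ ≤ V * majorant k) (hT : ∀ j, T j < N) (hδ : δ ≤ 1) (hδV : 2 * δ * V ≤ ε)
    {j₀ : ι} (hE : 0 ≤ E) (hlam : ∀ i, E + c ≤ lam i)
    (h_dist : ∀ i j, T j₀ ≤ T j →
      |lam i - μ j i| * ((R * N : ℕ) : ℝ) ^ α ≤ δ + E * ((R : ℝ) * ((T j : ℝ) - T j₀)) ^ α) :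
    Approximates (wExp α) lam (u ^ m) v ε (R * T j₀) := by
  intro i k
  rcases lt_or_ge k R with hk | hk
  · have h_cell : R * T j₀ + k ≤ R * N := by nlinarith [hT j₀]
    have h_close : |lam i - μ j₀ i| * ((R * T j₀ + k : ℕ) : ℝ) ^ α ≤ δ := calc
      |lam i - μ j₀ i| * ((R * T j₀ + k : ℕ) : ℝ) ^ α
          ≤ |lam i - μ j₀ i| * ((R * N : ℕ) : ℝ) ^ α := by gcongr
      _ ≤ δ := by simpa [Real.zero_rpow hα.ne'] using h_dist i j₀ le_rfl
    have hδ0 : 0 ≤ δ := le_trans (by positivity) h_close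
    calc _ ≤ 2 * δ * ‖v i k‖ := (hu i).norm_weightProd_mul_pow_sub_le hα.le hk hδ h_close
      _ ≤ 2 * δ * (V * majorant k) := by gcongr; exact hV i k
      _ ≤ ε * majorant k := by
        rw [← mul_assoc]
        exact mul_le_mul_of_nonneg_right hδV (majorant_pos k).le
  · have hW0 : 0 ≤ W := le_trans (by positivity) (hR.norm_mul_exp_le i 0)
    rw [hR.eq_zero i k hk, sub_zero]
    calc _ ≤ W * Real.exp (δ - c * (k : ℝ) ^ α) :=
          (hu i).norm_weightProd_mul_pow_le_of_le hm hα.le (fun j => hμ j i) (hR.norm_mul_exp_le i)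
            hT hE (hlam i) (h_dist i) hk
      _ ≤ W * Real.exp (1 - c * (k : ℝ) ^ α) := by gcongr
      _ ≤ ε * majorant k := hR.mul_exp_one_sub_le k hk

theorem IsHolderNet.dist_mul_rpow_le {pos : ι → ℕ} {pt : ι → Fin d → ℝ}
    (h : IsHolderNet α C N (δ / (N : ℝ) ^ α) pos pt) (R : ℕ) {y : Fin d → ℝ} {j₀ j : ι}
    (hy : dist y (pt j₀) ≤ δ / (N : ℝ) ^ α) (hj : pos j₀ ≤ pos j) :
    dist y (pt j) * ((R * (2 * N) : ℕ) : ℝ) ^ α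
      ≤ (2 * R) ^ α * δ + 2 ^ α * C * ((R : ℝ) * ((pos j : ℝ) - pos j₀)) ^ α := by
  have hN : (0 : ℝ) < N := Nat.cast_pos.2 ((Nat.zero_le _).trans_lt (h.pos_lt j))
  have h_gap : 0 ≤ (pos j : ℝ) - pos j₀ := sub_nonneg.2 (Nat.cast_le.2 hj)
  calc dist y (pt j) * ((R * (2 * N) : ℕ) : ℝ) ^ α
      ≤ (δ / (N : ℝ) ^ α + C * (((pos j : ℝ) - pos j₀) / N) ^ α)
          * ((R * (2 * N) : ℕ) : ℝ) ^ α := by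
        gcongr
        exact (dist_triangle _ _ _).trans (add_le_add hy (h.dist_le _ _ hj))
    _ = (2 * R) ^ α * δ + 2 ^ α * C * ((R : ℝ) * ((pos j : ℝ) - pos j₀)) ^ α := by
        push_cast
        rw [Real.div_rpow h_gap hN.le, Real.mul_rpow R.cast_nonneg h_gap,
          Real.mul_rpow R.cast_nonneg (by positivity), Real.mul_rpow zero_le_two hN.le,
          Real.mul_rpow zero_le_two R.cast_nonneg]
        field_simp

theorem IsCellPattern.norm_le {μ : ι → ℝ} {v u : ℕ → ℂ} (hu : IsCellPattern α m R T μ v u)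
    (hm : m ≠ 0) (hμ : ∀ j, μ j ∈ Set.Icc c A)
    (hW : ∀ k : ℕ, ‖v k‖ * Real.exp (A * (k : ℝ) ^ α) ≤ W) (hT : ∀ j, 1 ≤ T j) (hε : 0 ≤ ε)
    (h_decay : ∀ q ≥ R, W * Real.exp (-(c * (q : ℝ) ^ α)) ≤ ε ^ m * majorant q ^ m) (q : ℕ) :
    ‖u q‖ ≤ ε * majorant q := by
  have hεω : 0 ≤ ε * majorant q := mul_nonneg hε (majorant_pos q).le
  rcases lt_or_ge q R with hq | hq
  · rw [hu.eq_zero_of_lt hT (by rwa [mul_one]), norm_zero]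
    exact hεω
  · refine le_of_pow_le_pow_left₀ hm hεω ?_
    rw [mul_pow]
    exact (hu.norm_pow_le hm hμ hW q).trans (h_decay q hq)

theorem exists_add_smul_eq_of_mem_Icc (hη : 0 < η) {a x : Fin d → ℝ}
    (hx : x ∈ Set.Icc a (a + fun _ => η)) : ∃ y ∈ Set.Icc 0 1, a + η • y = x := by
  refine ⟨η⁻¹ • (x - a), ⟨fun i => ?_, fun i => ?_⟩, by simp [smul_smul, hη.ne']⟩
  · exact mul_nonneg (inv_nonneg.2 hη.le) (sub_nonneg.2 (hx.1 i))
  · exact (inv_mul_le_one₀ hη).2 (sub_left_le_of_le_add (hx.2 i))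

theorem abs_add_smul_sub_add_smul_le (hη : 0 ≤ η) (a y y' : Fin d → ℝ) (i : Fin d) :
    |(a + η • y) i - (a + η • y') i| ≤ η * dist y y' := calc
  |(a + η • y) i - (a + η • y') i| ≤ dist (a + η • y) (a + η • y') :=
    dist_le_pi_dist (a + η • y) (a + η • y') i
  _ = η * dist y y' := by rw [dist_add_left, dist_smul₀, Real.norm_of_nonneg hη]

theorem exists_isBlock_of_isHolderNet {pos : ι → ℕ} {pt : ι → Fin d → ℝ} {a : Fin d → ℝ}
    {v : Fin d → ℕ →₀ ℂ} (h : IsHolderNet α C N (δ / (N : ℝ) ^ α) pos pt) (hMN : M ≤ N)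
    (hN : 1 ≤ N) (hR : IsCellLength α c A W ε m v R) (hm : m ≠ 0) (hα : 0 < α) (hC : 0 ≤ C)
    (hη : 0 < η) (hε : 0 ≤ ε)
    (ha : ∀ i, a i ∈ Set.Icc (η * (2 ^ α * C) + c) (A - η))
    (hV : ∀ i k, ‖v i k‖ ≤ V * majorant k) (hδ : η * ((2 * R) ^ α * δ) ≤ 1)
    (hδV : 2 * (η * ((2 * R) ^ α * δ)) * V ≤ ε) :
    ∃ u, IsBlock (wExp α) (Set.Icc a (a + fun _ => η)) m v ε M (R * (2 * N)) u := by
  have hE : 0 ≤ η * (2 ^ α * C) := by positivity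
  set μ : ι → Fin d → ℝ := fun j => a + η • pt j with hμ_def
  have hμ (j : ι) (i : Fin d) : μ j i ∈ Set.Icc c A := by
    have h0 : 0 ≤ η * pt j i := mul_nonneg hη.le ((h.mem_Icc j).1 i)
    have h1 : η * pt j i ≤ η := mul_le_of_le_one_right hη.le ((h.mem_Icc j).2 i)
    simp only [hμ_def, Pi.add_apply, Pi.smul_apply, smul_eq_mul]
    constructor <;> linarith [(ha i).1, (ha i).2]
  have hμ_eq (j j' : ι) (hjj' : N + pos j = N + pos j') : μ j = μ j' := by
    simp only [hμ_def, h.eq_of_pos_eq hα.ne' (Nat.add_left_cancel hjj')]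
  have hT (j : ι) : N + pos j < 2 * N := by linarith [h.pos_lt j]
  choose u hu using fun i => exists_isCellPattern α hm R
    (fun j j' hjj' => congrFun (hμ_eq j j' hjj') i) (v i)
  have hR1 := hR.one_le
  refine ⟨u, by nlinarith, fun i q hq => (hu i).eq_zero_of_le hT hq, fun i => (hu i).norm_le hm
    (fun j => hμ j i) (hR.norm_mul_exp_le i) (fun j => hN.trans (Nat.le_add_right _ _)) hε
    hR.mul_exp_neg_le, ?_⟩
  intro lam hlam
  obtain ⟨y, hy, rfl⟩ := exists_add_smul_eq_of_mem_Icc hη hlam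
  obtain ⟨j₀, hj₀⟩ := h.exists_dist_le y hy
  refine ⟨R * (N + pos j₀), ⟨by nlinarith, by nlinarith [hT j₀]⟩,
    approximates_of_isCellPattern hu hm hα hR (fun j i => (hμ j i).2) hV hT hδ hδV hE
      (fun i => (ha i).1.trans (le_add_of_nonneg_right (mul_nonneg hη.le (hy.1 i))))
      fun i j hj => ?_⟩
  calc |(a + η • y) i - μ j i| * ((R * (2 * N) : ℕ) : ℝ) ^ α
      ≤ η * dist y (pt j) * ((R * (2 * N) : ℕ) : ℝ) ^ α := by
        gcongr
        exact abs_add_smul_sub_add_smul_le hη.le a y (pt j) i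
    _ = η * (dist y (pt j) * ((R * (2 * N) : ℕ) : ℝ) ^ α) := mul_assoc _ _ _
    _ ≤ η * ((2 * R) ^ α * δ + 2 ^ α * C * ((R : ℝ) * ((pos j : ℝ) - pos j₀)) ^ α) := by
        gcongr
        exact h.dist_mul_rpow_le R hj₀ (Nat.le_of_add_le_add_left hj)
    _ = _ := by push_cast; ring_nf

theorem exists_isBlock_wExp (hα : 0 < α) (hαd : α * d < 1) :
    ∃ K > 0, ∀ η > 0, ∀ a : Fin d → ℝ, (∀ i, η * K ≤ a i) → ∀ m ≠ 0, ∀ v, ∀ ε > 0, ∀ M,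
      ∃ L u, IsBlock (wExp α) (Set.Icc a (a + fun _ => η)) m v ε M L u := by
  obtain ⟨C, hC, h_net⟩ := exists_isHolderNet hα.le hαd
  refine ⟨2 ^ α * C + 1, by positivity, fun η hη a ha m hm v ε hε M => ?_⟩
  obtain ⟨W, R, hR⟩ := exists_isCellLength hα hη (‖a‖ + η) hε m v
  choose V' _ hV' using fun i => exists_norm_le_majorant_of_finsupp (v i)
  obtain ⟨V, hV⟩ := Finite.exists_le V'
  have h_lim : Tendsto (fun τ : ℝ => 2 * τ * V) (𝓝[>] 0) (𝓝 0) :=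
    (Continuous.tendsto' (by fun_prop) 0 0 (by simp)).mono_left nhdsWithin_le_nhds
  obtain ⟨τ, ⟨hτ, hτ_one⟩, hτV⟩ :=
    (Filter.Eventually.and (Ioc_mem_nhdsGT one_pos) (h_lim.eventually_le_const hε)).exists
  have hR0 : (0 : ℝ) < R := Nat.cast_pos.2 hR.one_le
  have h_scale : 0 < η * (2 * R) ^ α := by positivity
  obtain ⟨N, hN, ι, pos, pt, h⟩ :=
    h_net (τ / (η * (2 * R) ^ α)) (by positivity) (max 1 M)
  have h_precision : η * ((2 * R) ^ α * (τ / (η * (2 * R) ^ α))) = τ := by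
    rw [← mul_assoc, mul_div_cancel₀ _ h_scale.ne']
  refine ⟨_, exists_isBlock_of_isHolderNet h (le_of_max_le_right hN) (le_of_max_le_left hN) hR hm
    hα hC.le hη hε.le (fun i => ⟨?_, ?_⟩) (V := V) (fun i k => (hV' i k).trans ?_) ?_ ?_⟩
  · rw [← mul_add_one]
    exact ha i
  · rw [add_sub_cancel_right]
    exact (le_abs_self _).trans (norm_le_pi_norm a i)
  · exact mul_le_mul_of_nonneg_right (hV i) (majorant_pos k).le
  · exact h_precision.trans_le hτ_one
  · rwa [h_precision]

theorem exists_isPowerUniversal_wExp (hα : 0 < α) (hα1 : α ≤ 1) (hαd : α * d < 1) :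
    ∃ u, (∀ i q, ‖u i q‖ ≤ majorant q) ∧
      IsPowerUniversal (wExp α) {lam : Fin d → ℝ | ∀ i, 0 < lam i} u := by
  obtain ⟨K, hK, h_block⟩ := exists_isBlock_wExp hα hαd
  refine exists_isPowerUniversal ⟨1, fun _ => one_pos⟩ fun lam hlam => ?_
  have h_small : ∀ᶠ η in 𝓝[>] (0 : ℝ), ∀ i, η * (K + 1) < lam i := by
    refine eventually_all.2 fun i => (Tendsto.mono_left ?_ nhdsWithin_le_nhds).eventually_lt_const
      (hlam i)
    exact (continuous_mul_const _).tendsto' 0 0 (zero_mul _)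
  obtain ⟨η, hη_lt, hη⟩ := (h_small.and self_mem_nhdsWithin).exists
  set a : Fin d → ℝ := lam - fun _ => η / 2 with ha_def
  have ha (i : Fin d) : η * K ≤ a i := by
    rw [ha_def, Pi.sub_apply]
    linarith [hη_lt i]
  refine ⟨Set.Icc a (a + fun _ => η), mem_nhdsWithin_of_mem_nhds <| pi_Icc_mem_nhds
      (fun i => sub_lt_self _ (half_pos hη)) fun i => ?_,
    ⟨Real.exp (‖a‖ + η), fun lam' hlam' i n => abs_wExp_le hα.le hα1 ⟨?_, ?_⟩ n⟩,
    h_block η hη a ha⟩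
  · rw [ha_def, Pi.add_apply, Pi.sub_apply]
    linarith
  · exact le_trans (by positivity) ((ha i).trans (hlam'.1 i))
  · exact (hlam'.2 i).trans (add_le_add_left ((le_abs_self _).trans (norm_le_pi_norm a i)) η)

end ExponentialBlocks

/-- Example 2.4 of the paper, case `X = ℓᵖ(ℕ)`, `w 1 (λ) ⋯ w n (λ) = exp (λ n^α)`. -/
theorem stmt_11 (d : ℕ) (hd : 1 ≤ d) (p : ℝ≥0∞) [Fact (1 ≤ p)] (hp : p ≠ ⊤)
    (α : ℝ) (hα0 : 0 < α) (hα1 : α < 1 / (d : ℝ))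
    (T : (Fin d → ℝ) → ((Fin d → lpC p) →L[ℂ] (Fin d → lpC p)))
    (hT : ∀ lam : Fin d → ℝ, (∀ i, 0 < lam i) → IsProductShift p d (wExp α) (T lam) lam) :
    CommonHypercyclicAlgebraCW p d {lam | ∀ i, 0 < lam i} T := by
  have hd' : (1 : ℝ) ≤ d := Nat.one_le_cast.2 hd
  have hα_le : α ≤ 1 := hα1.le.trans ((div_le_one (by positivity)).2 hd')
  have hαd : α * d < 1 := (lt_div_iff₀ (by positivity)).1 hα1
  have h_nonempty : {lam : Fin d → ℝ | ∀ i, 0 < lam i}.Nonempty := ⟨1, fun _ => one_pos⟩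
  obtain ⟨u, hu, hu_univ⟩ := exists_isPowerUniversal_wExp hα0 hα_le hαd
  exact commonHypercyclicAlgebraCW_of_isPowerUniversal hp hd h_nonempty hT hu hu_univ
end
end
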